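/- arXiv:1608.04209 — 5 statements merged into one kernel-verified Lean document; each statement's English description precedes it below -/
import Mathlib

section
/- The Fermat quartic surface {x₀⁴ + x₁⁴ + x₂⁴ + x₃⁴ = 0} ⊆ ℙ³(K) is smooth and contains exactly 112 lines. -/
/-!
In characteristic 3 the Fermat form is `F(v) = B(v, v)` for the "Hermitian" pairing
`B(v, w) = ∑ vᵢ³ wᵢ`, which is additive in both variables. Comparing `F(v + t w)` for `t = 1`
and `t = √-1` shows that `F` vanishes on a subspace iff `B` does (`pairing_eq_zero`), so lines on
the surface are the `B`-isotropic planes `W ⊆ K⁴`.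

If the projection of `W` to `(v₀, v₁)` is bijective, `W` is the graph of a `2 × 2` matrix which is
unitary up to sign; there are 24 choices for its first row and then 4 for the second
(`encard_graphParams`), which gives 96 lines. Otherwise `W` contains a vector `(0, 0, 1, b)`, and
isotropy forces `W = {v₁ = d v₀, v₃ = b v₂}` with `b⁴ = d⁴ = -1`, which gives 16 more lines.

Smoothness holds because the partial derivatives are `4 xᵢ³ = xᵢ³`.
-/

noncomputable section

open MvPolynomial

/-- Points of the projective space ℙ³(K). -/
abbrev Pt (K : Type*) [Field K] := Projectivization K (Fin 4 → K)

variable {K : Type*} [Field K]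

/-- A homogeneous polynomial vanishes at a projective point. -/
def PZero (F : MvPolynomial (Fin 4) K) (p : Pt K) : Prop :=
  ∀ v ∈ p.submodule, eval v F = 0

/-- The surface (zero locus in ℙ³) of a form `F`. -/
def SurfOf (F : MvPolynomial (Fin 4) K) : Set (Pt K) := {p | PZero F p}

/-- A line in ℙ³: projectivization of a 2-dimensional linear subspace of K⁴. -/
def IsLine (ℓ : Set (Pt K)) : Prop :=
  ∃ W : Submodule K (Fin 4 → K), Module.finrank K W = 2 ∧ ℓ = {p | p.submodule ≤ W}

/-- A singular point of the surface `{F = 0}`: a point of the surface where all four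
partial derivatives of `F` vanish. -/
def IsSingPt (F : MvPolynomial (Fin 4) K) (p : Pt K) : Prop :=
  p ∈ SurfOf F ∧ ∀ i : Fin 4, ∀ v ∈ p.submodule, eval v (pderiv i F) = 0

/-- The set of lines lying on the surface `{F = 0}`. -/
def LinesOn (F : MvPolynomial (Fin 4) K) : Set (Set (Pt K)) :=
  {ℓ | IsLine ℓ ∧ ℓ ⊆ SurfOf F}

/-- The valency of a line `ℓ` on `{F = 0}`: the number of lines on the surface, distinct
from `ℓ`, meeting `ℓ` in a smooth point of the surface. -/
def valency (F : MvPolynomial (Fin 4) K) (ℓ : Set (Pt K)) : ℕ∞ :=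
  {ℓ' | ℓ' ∈ LinesOn F ∧ ℓ' ≠ ℓ ∧ ∃ p ∈ ℓ' ∩ ℓ, ¬ IsSingPt F p}.encard

/-- Data exhibiting the residual cubic `{G = 0}` of the line `ℓ = {h = h' = 0}` in the
plane `Π = {h = 0}` (not contained in the quartic `{F = 0}`): `F = h'·G + h·Q`. -/
def ResDecomp (F : MvPolynomial (Fin 4) K) (ℓ : Set (Pt K))
    (h h' G Q : MvPolynomial (Fin 4) K) : Prop :=
  h.IsHomogeneous 1 ∧ h'.IsHomogeneous 1 ∧ G.IsHomogeneous 3 ∧ Q.IsHomogeneous 3 ∧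
  ℓ = {p | PZero h p ∧ PZero h' p} ∧
  ¬ ({p | PZero h p} ⊆ SurfOf F) ∧
  F = h' * G + h * Q

/-- `p` is a singular point of the plane cubic curve `{h = 0} ∩ {G = 0}` (the residual
cubic): all partial derivatives of the restriction of `G` to the plane `{h = 0}` vanish
at `p`, i.e. all derivatives of `G` at `p` in directions lying in the plane vanish. -/
def CubicSingAt (h G : MvPolynomial (Fin 4) K) (p : Pt K) : Prop :=
  PZero h p ∧ PZero G p ∧
  ∀ v ∈ p.submodule, ∀ w : Fin 4 → K, eval w h = 0 →
    ∑ i : Fin 4, w i * eval v (pderiv i G) = 0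

/-- A line on `{F = 0}` containing no singular point of the surface is inseparable if
every residual cubic meets it in exactly one point. -/
def InseparableLine (F : MvPolynomial (Fin 4) K) (ℓ : Set (Pt K)) : Prop :=
  (∀ p ∈ ℓ, ¬ IsSingPt F p) ∧
  ∀ h h' G Q : MvPolynomial (Fin 4) K, ResDecomp F ℓ h h' G Q →
    ∃! p : Pt K, p ∈ ℓ ∧ PZero G p

/-- An inseparable line is cuspidal if moreover, for every plane through it, the unique
intersection point of the line with the residual cubic is a singular point of the
residual cubic. -/
def CuspidalLine (F : MvPolynomial (Fin 4) K) (ℓ : Set (Pt K)) : Prop :=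
  InseparableLine F ℓ ∧
  ∀ h h' G Q : MvPolynomial (Fin 4) K, ResDecomp F ℓ h h' G Q →
    ∀ p ∈ ℓ, PZero G p → CubicSingAt h G p

/-- The map on ℙ³ induced by a linear automorphism of K⁴. -/
def projMap (g : (Fin 4 → K) ≃ₗ[K] (Fin 4 → K)) : Pt K → Pt K :=
  Projectivization.map g.toLinearMap g.injective

/-- Two subsets of ℙ³ are projectively equivalent if some projective linear
transformation maps one onto the other. -/
def ProjEquivalent (S T : Set (Pt K)) : Prop :=
  ∃ g : (Fin 4 → K) ≃ₗ[K] (Fin 4 → K), projMap g '' S = T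

/-- The Fermat quartic form x₀⁴ + x₁⁴ + x₂⁴ + x₃⁴. -/
def FermatQuartic (K : Type*) [Field K] : MvPolynomial (Fin 4) K :=
  X 0 ^ 4 + X 1 ^ 4 + X 2 ^ 4 + X 3 ^ 4

/-- A star on `{F = 0}`: four pairwise distinct lines on the surface passing through a
common point which is a smooth point of the surface. -/
def IsStar (F : MvPolynomial (Fin 4) K) (l1 l2 l3 l4 : Set (Pt K)) : Prop :=
  l1 ∈ LinesOn F ∧ l2 ∈ LinesOn F ∧ l3 ∈ LinesOn F ∧ l4 ∈ LinesOn F ∧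
  l1 ≠ l2 ∧ l1 ≠ l3 ∧ l1 ≠ l4 ∧ l2 ≠ l3 ∧ l2 ≠ l4 ∧ l3 ≠ l4 ∧
  ∃ p : Pt K, p ∈ l1 ∧ p ∈ l2 ∧ p ∈ l3 ∧ p ∈ l4 ∧ ¬ IsSingPt F p

/-- A triangle on `{F = 0}`: three distinct lines on the surface pairwise intersecting
in three distinct smooth points of the surface. -/
def IsTriangle (F : MvPolynomial (Fin 4) K) (l1 l2 l3 : Set (Pt K)) : Prop :=
  l1 ∈ LinesOn F ∧ l2 ∈ LinesOn F ∧ l3 ∈ LinesOn F ∧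
  l1 ≠ l2 ∧ l1 ≠ l3 ∧ l2 ≠ l3 ∧
  ∃ p12 p13 p23 : Pt K,
    p12 ∈ l1 ∩ l2 ∧ p13 ∈ l1 ∩ l3 ∧ p23 ∈ l2 ∩ l3 ∧
    p12 ≠ p13 ∧ p12 ≠ p23 ∧ p13 ≠ p23 ∧
    ¬ IsSingPt F p12 ∧ ¬ IsSingPt F p13 ∧ ¬ IsSingPt F p23

/-- The polynomial obtained from `F` by the linear change of coordinates `g`. -/
def linSubst (g : (Fin 4 → K) ≃ₗ[K] (Fin 4 → K)) (F : MvPolynomial (Fin 4) K) :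
    MvPolynomial (Fin 4) K :=
  aeval (fun i => ∑ j : Fin 4, C (g (Pi.single j 1) i) * X j) F

/-- `P` is a double point of the quartic `{F = 0}`: the Taylor expansion of `F`,
in affine coordinates centered at a representative of `P`, has vanishing parts in
degrees `< 2` and a nonzero part in degree `2`. -/
def IsDoublePoint (F : MvPolynomial (Fin 4) K) (p : Pt K) : Prop :=
  p ∈ SurfOf F ∧
  ∀ v ∈ p.submodule, v ≠ 0 →
    (∀ d : Fin 4 →₀ ℕ, (d.sum fun _ n => n) < 2 →
      coeff d (aeval (fun i => X i + C (v i)) F : MvPolynomial (Fin 4) K) = 0) ∧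
    (∃ d : Fin 4 →₀ ℕ, (d.sum fun _ n => n) = 2 ∧
      coeff d (aeval (fun i => X i + C (v i)) F : MvPolynomial (Fin 4) K) ≠ 0)


/-! ### Points, lines and subspaces -/

/-- The set of points of `ℙ³` contained in the linear subspace `W` of `K⁴`. -/
def lineOf (W : Submodule K (Fin 4 → K)) : Set (Pt K) := {p | p.submodule ≤ W}

lemma mk_mem_lineOf (W : Submodule K (Fin 4 → K)) (v : Fin 4 → K) (hv : v ≠ 0) :
    Projectivization.mk K v hv ∈ lineOf W ↔ v ∈ W := by
  simp [lineOf, Projectivization.submodule_mk, Submodule.span_singleton_le_iff_mem]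

lemma lineOf_injective : Function.Injective (lineOf (K := K)) := by
  intro W W' h
  ext v
  by_cases hv : v = 0
  · simp [hv]
  · rw [← mk_mem_lineOf W v hv, h, mk_mem_lineOf]

lemma eval_fermat (v : Fin 4 → K) :
    eval v (FermatQuartic K) = v 0 ^ 4 + v 1 ^ 4 + v 2 ^ 4 + v 3 ^ 4 := by
  simp [FermatQuartic]

lemma lineOf_subset_iff (W : Submodule K (Fin 4 → K)) :
    lineOf W ⊆ SurfOf (FermatQuartic K) ↔
      ∀ v ∈ W, v 0 ^ 4 + v 1 ^ 4 + v 2 ^ 4 + v 3 ^ 4 = 0 := by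
  constructor
  · intro h v hv
    by_cases hv0 : v = 0
    · simp [hv0]
    · have := h ((mk_mem_lineOf W v hv0).2 hv) v
        (by simp [Projectivization.submodule_mk, Submodule.mem_span_singleton_self])
      rwa [eval_fermat] at this
  · intro h p hp v hv
    rw [eval_fermat]
    exact h v (hp hv)

lemma linesOn_eq : LinesOn (FermatQuartic K) = lineOf '' {W : Submodule K (Fin 4 → K) |
    Module.finrank K W = 2 ∧ ∀ v ∈ W, v 0 ^ 4 + v 1 ^ 4 + v 2 ^ 4 + v 3 ^ 4 = 0} := by
  ext l
  constructor
  · rintro ⟨⟨W, hW, rfl⟩, hl⟩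
    exact ⟨W, ⟨hW, (lineOf_subset_iff W).1 hl⟩, rfl⟩
  · rintro ⟨W, ⟨hW, h⟩, rfl⟩
    exact ⟨⟨W, hW, rfl⟩, (lineOf_subset_iff W).2 h⟩

/-! ### Isotropy and roots in characteristic 3 -/

lemma three_eq_zero [CharP K 3] : (3 : K) = 0 := by
  exact_mod_cast CharP.cast_eq_zero K 3

lemma two_ne_zero_of_char_three [CharP K 3] : (2 : K) ≠ 0 := fun h =>
  one_ne_zero (α := K) (by linear_combination three_eq_zero (K := K) - h)

lemma exists_sq_eq_neg_one [IsAlgClosed K] : ∃ i : K, i ^ 2 = -1 :=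
  IsAlgClosed.exists_pow_nat_eq _ (by norm_num)

/-- A subspace on which the Fermat form vanishes is isotropic for `∑ vᵢ³ wᵢ`. -/
lemma pairing_eq_zero [IsAlgClosed K] [CharP K 3] {W : Submodule K (Fin 4 → K)}
    (hW : ∀ v ∈ W, v 0 ^ 4 + v 1 ^ 4 + v 2 ^ 4 + v 3 ^ 4 = 0) {v w : Fin 4 → K}
    (hv : v ∈ W) (hw : w ∈ W) :
    v 0 ^ 3 * w 0 + v 1 ^ 3 * w 1 + v 2 ^ 3 * w 2 + v 3 ^ 3 * w 3 = 0 := by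
  obtain ⟨i, hi⟩ := exists_sq_eq_neg_one (K := K)
  have h3 := three_eq_zero (K := K)
  have hi0 : i ≠ 0 := by rintro rfl; simp at hi
  -- `F (v + t w) = F v + t B(v, w) + t³ B(w, v) + t⁴ F w`
  have key : ∀ t : K, t * (v 0 ^ 3 * w 0 + v 1 ^ 3 * w 1 + v 2 ^ 3 * w 2 + v 3 ^ 3 * w 3)
      + t ^ 3 * (w 0 ^ 3 * v 0 + w 1 ^ 3 * v 1 + w 2 ^ 3 * v 2 + w 3 ^ 3 * v 3) = 0 := by
    intro t
    have h := hW _ (W.add_mem hv (W.smul_mem t hw))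
    have e : ∀ x y : K, (x + t * y) ^ 4 = x ^ 4 + t * (x ^ 3 * y) + t ^ 3 * (y ^ 3 * x)
        + t ^ 4 * y ^ 4 := by
      intro x y
      linear_combination (t * x ^ 3 * y + 2 * t ^ 2 * x ^ 2 * y ^ 2 + t ^ 3 * x * y ^ 3) * h3
    simp only [Pi.add_apply, Pi.smul_apply, smul_eq_mul, e] at h
    linear_combination h - hW v hv - t ^ 4 * hW w hw
  have h1 := key 1
  have h2 := key i
  have h4 : 2 * i * (v 0 ^ 3 * w 0 + v 1 ^ 3 * w 1 + v 2 ^ 3 * w 2 + v 3 ^ 3 * w 3) = 0 := by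
    linear_combination h2 + i * h1 -
      i * (w 0 ^ 3 * v 0 + w 1 ^ 3 * v 1 + w 2 ^ 3 * v 2 + w 3 ^ 3 * v 3) * hi
  exact (mul_eq_zero.1 h4).resolve_left
    (mul_ne_zero two_ne_zero_of_char_three hi0)

lemma encard_fourth_roots [IsAlgClosed K] [CharP K 3] {c : K} (hc : c ≠ 0) :
    {x : K | x ^ 4 = c}.encard = 4 := by
  obtain ⟨i, hi⟩ := exists_sq_eq_neg_one (K := K)
  obtain ⟨r, rfl⟩ := IsAlgClosed.exists_pow_nat_eq (n := 4) c (by norm_num)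
  have h2 := two_ne_zero_of_char_three (K := K)
  have hr : r ≠ 0 := by rintro rfl; simp at hc
  have hi0 : i ≠ 0 := by rintro rfl; simp at hi
  have hp : i ≠ 1 := by rintro rfl; exact h2 (by linear_combination hi)
  have hm : i ≠ -1 := by rintro rfl; exact h2 (by linear_combination hi)
  have hset : {x : K | x ^ 4 = r ^ 4} = {r, -r, i * r, -(i * r)} := by
    ext x
    simp only [Set.mem_ofPred_eq, Set.mem_insert_iff, Set.mem_singleton_iff]
    constructor
    · intro h
      have : (x - r) * ((x + r) * ((x - i * r) * (x + i * r))) = 0 := by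
        linear_combination h - (x ^ 2 - r ^ 2) * r ^ 2 * hi
      rcases mul_eq_zero.1 this with h | h
      · exact Or.inl (sub_eq_zero.1 h)
      rcases mul_eq_zero.1 h with h | h
      · exact Or.inr (Or.inl (eq_neg_of_add_eq_zero_left h))
      rcases mul_eq_zero.1 h with h | h
      · exact Or.inr (Or.inr (Or.inl (sub_eq_zero.1 h)))
      · exact Or.inr (Or.inr (Or.inr (eq_neg_of_add_eq_zero_left h)))
    · have h4 : i ^ 4 = 1 := by linear_combination (i ^ 2 - 1) * hi
      rintro (rfl | rfl | rfl | rfl)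
      · rfl
      · ring
      · rw [mul_pow, h4, one_mul]
      · linear_combination r ^ 4 * h4
  have n1 : r ≠ -r := fun h => mul_ne_zero h2 hr (by linear_combination h)
  have n2 : r ≠ i * r := fun h => hp (mul_right_cancel₀ hr (by linear_combination -h))
  have n3 : r ≠ -(i * r) := fun h => hm (mul_right_cancel₀ hr (by linear_combination h))
  have n4 : i * r ≠ -(i * r) := fun h =>
    mul_ne_zero h2 (mul_ne_zero hi0 hr) (by linear_combination h)
  have n5 : -r ≠ i * r := fun h => n3 (by linear_combination -h)
  have n6 : -r ≠ -(i * r) := fun h => n2 (by linear_combination -h)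
  rw [hset, Set.encard_insert_of_notMem (by simp [n1, n2, n3]),
    Set.encard_insert_of_notMem (by simpa using ⟨n5, fun h => n2 h⟩),
    Set.encard_pair n4]
  norm_num

/-! ### The two families of isotropic planes -/

/-- The plane `{v₂ = a v₀ + c v₁, v₃ = b v₀ + d v₁}`, the graph of a `2 × 2` matrix. -/
def graphPlane (q : K × K × K × K) : Submodule K (Fin 4 → K) where
  carrier := {v | v 2 = q.1 * v 0 + q.2.2.1 * v 1 ∧ v 3 = q.2.1 * v 0 + q.2.2.2 * v 1}
  zero_mem' := by simp
  add_mem' := by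
    rintro v w ⟨h1, h2⟩ ⟨h3, h4⟩
    simp only [Set.mem_ofPred_eq, Pi.add_apply, h1, h2, h3, h4]
    constructor <;> ring
  smul_mem' := by
    rintro t v ⟨h1, h2⟩
    simp only [Set.mem_ofPred_eq, Pi.smul_apply, smul_eq_mul, h1, h2]
    constructor <;> ring

/-- The plane `{v₁ = d v₀, v₃ = b v₂}`. -/
def splitPlane (q : K × K) : Submodule K (Fin 4 → K) where
  carrier := {v | v 1 = q.1 * v 0 ∧ v 3 = q.2 * v 2}
  zero_mem' := by simp
  add_mem' := by
    rintro v w ⟨h1, h2⟩ ⟨h3, h4⟩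
    simp only [Set.mem_ofPred_eq, Pi.add_apply, h1, h2, h3, h4]
    constructor <;> ring
  smul_mem' := by
    rintro t v ⟨h1, h2⟩
    simp only [Set.mem_ofPred_eq, Pi.smul_apply, smul_eq_mul, h1, h2]
    constructor <;> ring

lemma mem_graphPlane {q : K × K × K × K} {v : Fin 4 → K} : v ∈ graphPlane q ↔
    v 2 = q.1 * v 0 + q.2.2.1 * v 1 ∧ v 3 = q.2.1 * v 0 + q.2.2.2 * v 1 := Iff.rfl

lemma mem_splitPlane {q : K × K} {v : Fin 4 → K} : v ∈ splitPlane q ↔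
    v 1 = q.1 * v 0 ∧ v 3 = q.2 * v 2 := Iff.rfl

lemma finrank_graphPlane (q : K × K × K × K) : Module.finrank K (graphPlane q) = 2 := by
  let e : graphPlane q ≃ₗ[K] (K × K) :=
    { toFun := fun v => (v.1 0, v.1 1)
      map_add' := fun _ _ => rfl
      map_smul' := fun _ _ => rfl
      invFun := fun x => ⟨![x.1, x.2, q.1 * x.1 + q.2.2.1 * x.2, q.2.1 * x.1 + q.2.2.2 * x.2],
        by simp [mem_graphPlane]⟩
      left_inv := by
        rintro ⟨v, h1, h2⟩
        ext j
        fin_cases j <;> simp [h1, h2]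
      right_inv := fun x => by simp }
  rw [e.finrank_eq]
  simp

lemma finrank_splitPlane (q : K × K) : Module.finrank K (splitPlane q) = 2 := by
  let e : splitPlane q ≃ₗ[K] (K × K) :=
    { toFun := fun v => (v.1 0, v.1 2)
      map_add' := fun _ _ => rfl
      map_smul' := fun _ _ => rfl
      invFun := fun x => ⟨![x.1, q.1 * x.1, x.2, q.2 * x.2], by simp [mem_splitPlane]⟩
      left_inv := by
        rintro ⟨v, h1, h2⟩
        ext j
        fin_cases j <;> simp [h1, h2]
      right_inv := fun x => by simp }
  rw [e.finrank_eq]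
  simp

lemma graphPlane_injective : Function.Injective (graphPlane (K := K)) := by
  rintro ⟨a, b, c, d⟩ ⟨a', b', c', d'⟩ h
  have h1 : ![1, 0, a, b] ∈ graphPlane (a', b', c', d') := by
    rw [← h]; simp [mem_graphPlane]
  have h2 : ![0, 1, c, d] ∈ graphPlane (a', b', c', d') := by
    rw [← h]; simp [mem_graphPlane]
  simp [mem_graphPlane] at h1 h2
  simp [h1, h2]

lemma splitPlane_injective : Function.Injective (splitPlane (K := K)) := by
  rintro ⟨d, b⟩ ⟨d', b'⟩ h
  have h1 : ![1, d, 1, b] ∈ splitPlane (d', b') := by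
    rw [← h]; simp [mem_splitPlane]
  simp [mem_splitPlane] at h1
  simp [h1]

lemma graphPlane_ne_splitPlane (q : K × K × K × K) (q' : K × K) :
    graphPlane q ≠ splitPlane q' := by
  intro h
  have h1 : ![0, 0, 1, q'.2] ∈ graphPlane q := by
    rw [h]; simp [mem_splitPlane]
  simp [mem_graphPlane] at h1

/-- Matrices with rows `(a, b)`, `(c, d)` whose graph is isotropic. -/
def graphParams (K : Type*) [Field K] : Set (K × K × K × K) :=
  {q | 1 + q.1 ^ 4 + q.2.1 ^ 4 = 0 ∧ 1 + q.2.2.1 ^ 4 + q.2.2.2 ^ 4 = 0 ∧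
    q.1 ^ 3 * q.2.2.1 + q.2.1 ^ 3 * q.2.2.2 = 0 ∧ q.2.2.1 ^ 3 * q.1 + q.2.2.2 ^ 3 * q.2.1 = 0}

lemma isotropic_planes_eq [IsAlgClosed K] [CharP K 3] :
    {W : Submodule K (Fin 4 → K) | Module.finrank K W = 2 ∧
      ∀ v ∈ W, v 0 ^ 4 + v 1 ^ 4 + v 2 ^ 4 + v 3 ^ 4 = 0} =
    graphPlane '' graphParams K ∪
      splitPlane '' ({x : K | x ^ 4 = -1} ×ˢ {x : K | x ^ 4 = -1}) := by
  have h3 := three_eq_zero (K := K)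
  ext W
  constructor
  · rintro ⟨hr, hW⟩
    let π : W →ₗ[K] (K × K) :=
      ((LinearMap.proj 0).prod (LinearMap.proj 1)).comp W.subtype
    have hπ : ∀ v, π v = (v.1 0, v.1 1) := fun v => rfl
    by_cases hinj : Function.Injective π
    · left
      have hsurj : Function.Surjective π :=
        (LinearMap.injective_iff_surjective_of_finrank_eq_finrank (by simp [hr])).1 hinj
      obtain ⟨⟨u, hu⟩, hu'⟩ := hsurj (1, 0)
      obtain ⟨⟨w, hw⟩, hw'⟩ := hsurj (0, 1)
      simp only [hπ, Prod.mk.injEq] at hu' hw'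
      refine ⟨(u 2, u 3, w 2, w 3), ?_, ?_⟩
      · have e1 := hW u hu
        have e2 := hW w hw
        have e3 := pairing_eq_zero hW hu hw
        have e4 := pairing_eq_zero hW hw hu
        simp only [hu'.1, hu'.2, hw'.1, hw'.2] at e1 e2 e3 e4
        exact ⟨by linear_combination e1, by linear_combination e2, by linear_combination e3,
          by linear_combination e4⟩
      · refine Submodule.eq_of_le_of_finrank_eq ?_ (by rw [finrank_graphPlane, hr])
        rintro v ⟨h1, h2⟩
        have : v = v 0 • u + v 1 • w := by
          ext j
          fin_cases j <;> simp [h1, h2, hu'.1, hu'.2, hw'.1, hw'.2] <;> ring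
        rw [this]
        exact W.add_mem (W.smul_mem _ hu) (W.smul_mem _ hw)
    · right
      -- a nonzero vector of `W` in the kernel of the projection, scaled to `(0, 0, 1, b)`
      obtain ⟨b, hb, hn⟩ : ∃ b : K, b ^ 4 = -1 ∧ ![0, 0, 1, b] ∈ W := by
        rw [← LinearMap.ker_eq_bot, Submodule.eq_bot_iff] at hinj
        push Not at hinj
        obtain ⟨⟨m, hm⟩, hm0, hm1⟩ := hinj
        rw [LinearMap.mem_ker, hπ] at hm0
        simp only [Prod.mk_eq_zero] at hm0
        have hF := hW m hm
        simp only [hm0.1, hm0.2] at hF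
        have hm2 : m 2 ≠ 0 := by
          intro h
          have h' : m 3 = 0 := by simpa [h] using hF
          apply hm1
          ext j
          fin_cases j <;> simp [h, h', hm0.1, hm0.2]
        refine ⟨m 3 / m 2, ?_, ?_⟩
        · field_simp
          linear_combination hF
        · have : ![0, 0, 1, m 3 / m 2] = (m 2)⁻¹ • m := by
            ext j
            fin_cases j <;> simp [hm0.1, hm0.2, hm2, div_eq_inv_mul]
          rw [this]
          exact W.smul_mem _ hm
      have hv3 : ∀ v ∈ W, v 3 = b * v 2 := by
        intro v hv
        have := pairing_eq_zero hW hn hv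
        simp at this
        linear_combination v 3 * hb - b * this
      obtain ⟨v, hv, hvn⟩ : ∃ v ∈ W, v ∉ K ∙ ![0, 0, 1, b] := by
        by_contra! hcon
        have h1 := Submodule.finrank_mono (show W ≤ K ∙ ![0, 0, 1, b] from hcon)
        have h2 := finrank_span_le_card (R := K) ({![0, 0, 1, b]} : Set (Fin 4 → K))
        simp at h2
        omega
      have hF := hW v hv
      have e3 := hv3 v hv
      have hF' : v 0 ^ 4 + v 1 ^ 4 = 0 := by
        rw [e3] at hF
        linear_combination hF - v 2 ^ 4 * hb
      have hv0 : v 0 ≠ 0 := by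
        intro h
        have h' : v 1 = 0 := by simpa [h] using hF'
        apply hvn
        rw [Submodule.mem_span_singleton]
        refine ⟨v 2, ?_⟩
        ext j
        fin_cases j <;> simp [h, h', e3, mul_comm]
      refine ⟨(v 1 / v 0, b), ⟨?_, hb⟩, ?_⟩
      · simp only [Set.mem_ofPred_eq]
        field_simp
        linear_combination hF'
      · refine Submodule.eq_of_le_of_finrank_eq ?_ (by rw [finrank_splitPlane, hr])
        rintro x ⟨h1, h2⟩
        have : x = (x 0 / v 0) • v + (x 2 - x 0 / v 0 * v 2) • ![0, 0, 1, b] := by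
          ext j
          fin_cases j <;> simp [h1, h2, e3] <;> field_simp <;> ring
        rw [this]
        exact W.add_mem (W.smul_mem _ hv) (W.smul_mem _ hn)
  · rintro (⟨⟨a, b, c, d⟩, ⟨h1, h2, h4, h5⟩, rfl⟩ | ⟨⟨d, b⟩, ⟨hd, hb⟩, rfl⟩)
    · refine ⟨finrank_graphPlane _, ?_⟩
      rintro v ⟨e1, e2⟩
      simp only at h1 h2 h4 h5 e1 e2
      have e : ∀ x y : K, (x + y) ^ 4 = x ^ 4 + x ^ 3 * y + y ^ 3 * x + y ^ 4 := by
        intro x y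
        linear_combination (x ^ 3 * y + 2 * x ^ 2 * y ^ 2 + x * y ^ 3) * h3
      rw [e1, e2, e, e]
      linear_combination v 0 ^ 4 * h1 + v 1 ^ 4 * h2 + v 0 ^ 3 * v 1 * h4 + v 0 * v 1 ^ 3 * h5
    · refine ⟨finrank_splitPlane _, ?_⟩
      rintro v ⟨e1, e2⟩
      simp only [Set.mem_ofPred_eq] at hd hb e1 e2
      rw [e1, e2]
      linear_combination v 0 ^ 4 * hd + v 2 ^ 4 * hb

/-! ### Counting -/

/-- The 24 first rows `(a, b)` of the matrices in `graphParams`. -/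
def firstRows (K : Type*) [Field K] : Set (K × K) :=
  ({0} ×ˢ {x : K | x ^ 4 = -1} ∪ {x : K | x ^ 4 = -1} ×ˢ {0}) ∪
    {x : K | x ^ 4 = 1} ×ˢ {x : K | x ^ 4 = 1}

lemma encard_firstRows [IsAlgClosed K] [CharP K 3] : (firstRows K).encard = 24 := by
  have hm := encard_fourth_roots (K := K) (c := -1) (by simp)
  have hp := encard_fourth_roots (K := K) (c := 1) (by simp)
  rw [firstRows, Set.encard_union_eq, Set.encard_union_eq, Set.encard_prod, Set.encard_prod,
    Set.encard_prod, hm, hp]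
  · norm_num
  · rw [Set.disjoint_left]
    rintro ⟨x, y⟩ ⟨hx, hy⟩ ⟨hx', hy'⟩
    simp_all
  · rw [Set.disjoint_left]
    rintro ⟨x, y⟩ (⟨hx, hy⟩ | ⟨hx, hy⟩) ⟨hx', hy'⟩ <;> simp_all

lemma firstRows_sum [CharP K 3] {a b : K} (h : (a, b) ∈ firstRows K) :
    1 + a ^ 4 + b ^ 4 = 0 := by
  rcases h with (⟨h1, h2⟩ | ⟨h1, h2⟩) | ⟨h1, h2⟩ <;>
    simp only [Set.mem_singleton_iff, Set.mem_ofPred_eq] at h1 h2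
  · rw [h1, h2]; ring
  · rw [h1, h2]; ring
  · rw [h1, h2]; linear_combination three_eq_zero (K := K)

/-- The second row is orthogonal to the first, hence a multiple `λ (-b³, a³)`, and `λ⁴ = 1`. -/
lemma graphParams_eq [CharP K 3] : graphParams K =
    (fun p : (K × K) × K => (p.1.1, p.1.2, -p.2 * p.1.2 ^ 3, p.2 * p.1.1 ^ 3)) ''
      (firstRows K ×ˢ {x : K | x ^ 4 = 1}) := by
  have h3 := three_eq_zero (K := K)
  have cube : ∀ a b : K, 1 + a ^ 4 + b ^ 4 = 0 → a ^ 12 + b ^ 12 = -1 := by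
    intro a b h
    linear_combination ((a ^ 4 + b ^ 4) ^ 2 - (a ^ 4 + b ^ 4) + 1) * h
      - a ^ 4 * b ^ 4 * (a ^ 4 + b ^ 4) * h3
  ext ⟨a, b, c, d⟩
  simp only [Set.mem_image]
  constructor
  · rintro ⟨h1, h2, h4, h5⟩
    simp only at h1 h2 h4 h5
    obtain ⟨l, hl⟩ : ∃ l : K, l = b * c - a * d := ⟨_, rfl⟩
    have hc : c = -l * b ^ 3 := by
      rw [hl]; linear_combination c * h1 - a * h4
    have hd : d = l * a ^ 3 := by
      rw [hl]; linear_combination d * h1 - b * h4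
    have hl4 : l ^ 4 = 1 := by
      have := cube a b h1
      rw [hc, hd] at h2
      linear_combination -h2 + l ^ 4 * this
    have hl0 : l ≠ 0 := by rintro rfl; simp at hl4
    refine ⟨((a, b), l), ⟨?_, hl4⟩, by simp [← hc, ← hd]⟩
    have hab : a * (b * (a ^ 4 - b ^ 4)) = 0 := by
      rw [hc, hd] at h5
      have : l ^ 3 * (a * (b * (a ^ 4 - b ^ 4))) = 0 := by
        linear_combination -h5 + l ^ 3 * a * b * (a ^ 4 - b ^ 4) * h1
      exact (mul_eq_zero.1 this).resolve_left (pow_ne_zero _ hl0)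
    rcases mul_eq_zero.1 hab with rfl | h
    · left; left
      exact ⟨rfl, by simp only [Set.mem_ofPred_eq]; linear_combination h1⟩
    rcases mul_eq_zero.1 h with rfl | h
    · left; right
      exact ⟨by simp only [Set.mem_ofPred_eq]; linear_combination h1, rfl⟩
    · right
      constructor <;> simp only [Set.mem_ofPred_eq]
      · linear_combination a ^ 4 * h3 - h1 - h
      · linear_combination b ^ 4 * h3 - h1 + h
  · rintro ⟨⟨⟨a', b'⟩, l⟩, ⟨hab, hl⟩, h⟩
    simp only [Prod.mk.injEq, Set.mem_ofPred_eq] at h hl hab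
    obtain ⟨rfl, rfl, rfl, rfl⟩ := h
    have h1 := firstRows_sum hab
    refine ⟨h1, ?_, ?_, ?_⟩ <;> simp only
    · linear_combination l ^ 4 * cube _ _ h1 - hl
    · ring
    · have h8 : a' * (b' * (a' ^ 8 - b' ^ 8)) = 0 := by
        rcases hab with (⟨h1, h2⟩ | ⟨h1, h2⟩) | ⟨h1, h2⟩ <;>
          simp only [Set.mem_singleton_iff, Set.mem_ofPred_eq] at h1 h2
        · simp [h1]
        · simp [h2]
        · linear_combination a' * b' * ((a' ^ 4 + 1) * h1 - (b' ^ 4 + 1) * h2)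
      linear_combination l ^ 3 * h8

lemma encard_graphParams [IsAlgClosed K] [CharP K 3] : (graphParams K).encard = 96 := by
  rw [graphParams_eq, Set.InjOn.encard_image, Set.encard_prod, encard_firstRows,
    encard_fourth_roots one_ne_zero]
  · norm_num
  · rintro ⟨⟨a, b⟩, l⟩ ⟨hab, -⟩ ⟨⟨a', b'⟩, l'⟩ - h
    simp only [Prod.mk.injEq] at h
    obtain ⟨rfl, rfl, h1, h2⟩ := h
    have := firstRows_sum hab
    have hl : l = l' := by linear_combination (l - l') * this - a * h2 + b * h1
    rw [hl]

/-- Over an algebraically closed field of characteristic 3, the Fermat quartic surface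
is smooth and contains exactly 112 lines. -/
theorem statement2 (K : Type*) [Field K] [IsAlgClosed K] [CharP K 3] :
    (∀ p : Pt K, ¬ IsSingPt (FermatQuartic K) p) ∧
      (LinesOn (FermatQuartic K)).encard = 112 := by
  constructor
  · rintro p ⟨-, h⟩
    apply p.rep_nonzero
    have h3 := three_eq_zero (K := K)
    have hp : p.rep ∈ p.submodule := by
      rw [Projectivization.submodule_eq]
      exact Submodule.mem_span_singleton_self _
    have key : ∀ i, p.rep i ^ 3 = 0 := by
      intro i
      have e := h i _ hp
      fin_cases i <;> simp [FermatQuartic, pderiv_X] at e ⊢ <;>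
        first
        | exact e
        | exact e.resolve_left fun h4 => one_ne_zero (α := K) (by linear_combination h4 - h3)
    ext i
    exact pow_eq_zero_iff (by norm_num) |>.1 (key i)
  · have hm := encard_fourth_roots (K := K) (c := -1) (by simp)
    rw [linesOn_eq, lineOf_injective.encard_image, isotropic_planes_eq, Set.encard_union_eq,
      graphPlane_injective.encard_image, splitPlane_injective.encard_image, encard_graphParams,
      Set.encard_prod, hm]
    · norm_num
    · rw [Set.disjoint_left]
      rintro _ ⟨q, -, rfl⟩ ⟨q', -, h⟩
      exact graphPlane_ne_splitPlane q q' h.symm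
end
end

section
/- Let F ∈ K[x₀,x₁,x₂,x₃] be an irreducible homogeneous polynomial of degree 4, let X = {F = 0} ⊆ ℙ³(K), and let P be a double point of X. Then at most 8 lines lying on X pass through P. -/
/-!
Let `v` represent the double point. In the direction of `w` one has
`F(v + t w) = t² q(w) + t³ c(w) + t⁴ d(w)`, where `q ≠ 0` is a quadratic form, the equation of the
tangent cone, which is invariant under translation by `v`. Every line through the point on the
surface lies on the cone `q = 0`, so a line corresponds to a common zero of `q` and `F` modulo `v`.

Since `F` is irreducible of degree `4`, the Nullstellensatz provides, for every nonzero form `m` of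
smaller positive degree, a zero `w` of `m` with `F(w) ≠ 0` (`exists_zero_and_ne_zero`).
There are two cases.

* If `q` is a product of two linear forms, the lines lie in one of two planes. In such a plane
  choose `w₀` with `F(w₀) ≠ 0` and `a` such that `v, w₀, a` is a basis. No line in question passes
  through `w₀`, so each is spanned by `v` and some `r w₀ + a`, where `r` is a root of the
  nonzero polynomial `F(r w₀ + a)` of degree at most `4`. So there are at most `4 + 4` lines
  (`encard_linesThrough_plane`, `encard_linesThrough_of_split`).
* Otherwise, choose `w₀` with `q(w₀) = 0` and `F(w₀) ≠ 0`, and complete `v, w₀` to a basis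
  `v, w₀, a, b` in which `q = x y + e z²`, `e ≠ 0`. The conic is parametrized by
  `r ↦ -e r² w₀ + r b + a`, with `w₀` at infinity, and `F` pulled back to it is a nonzero
  polynomial in `r` of degree at most `8` (`encard_linesThrough_of_smooth`).

The case distinction, on whether the polar form of `q` vanishes at `w₀`, is made in
`encard_linesThrough_le`. The characteristic matters only through `2 ≠ 0`.
-/

noncomputable section

open MvPolynomial

variable {K : Type*} [Field K]

/-! ### Forms in four variables -/

lemma degree_of_mem_support {m : MvPolynomial (Fin 4) K} {n : ℕ} (hm : m.IsHomogeneous n)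
    {d : Fin 4 →₀ ℕ} (hd : d ∈ m.support) : d.degree = n := by
  have := hm (mem_support_iff.mp hd)
  rw [Finsupp.degree_eq_weight_one]
  exact this

lemma eval_smul_of_isHomogeneous {m : MvPolynomial (Fin 4) K} {n : ℕ} (hm : m.IsHomogeneous n)
    (t : K) (w : Fin 4 → K) : eval (t • w) m = t ^ n * eval w m := by
  rw [eval_eq, eval_eq, Finset.mul_sum]
  refine Finset.sum_congr rfl fun d hd => ?_
  have h1 : d.degree = n := degree_of_mem_support hm hd
  simp only [Pi.smul_apply, smul_eq_mul, mul_pow, Finset.prod_mul_distrib, Finset.prod_pow_eq_pow_sum]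
  rw [← h1, Finsupp.degree_apply]
  ring

/-- If `F` vanished on all of `{m = 0}`, the Nullstellensatz would give `m ∣ F ^ k`; as `F` is
prime, `m` would be a unit or a multiple of `F`, and both contradict the degree of `m`. -/
lemma exists_zero_and_ne_zero [IsAlgClosed K] {F m : MvPolynomial (Fin 4) K} (hF : Irreducible F)
    (hF4 : F.IsHomogeneous 4) {e : ℕ} (hm : m.IsHomogeneous e) (hm0 : m ≠ 0) (he : 1 ≤ e)
    (he4 : e < 4) : ∃ w, eval w m = 0 ∧ eval w F ≠ 0 := by
  by_contra! h
  have h1 : F ∈ (Ideal.span {m}).radical := by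
    rw [← vanishingIdeal_zeroLocus_eq_radical (K := K), mem_vanishingIdeal_iff]
    intro x hx
    rw [mem_zeroLocus_iff] at hx
    have := hx m (Ideal.mem_span_singleton_self m)
    rw [aeval_eq_eval] at this ⊢
    exact h x this
  obtain ⟨k, hk⟩ := h1
  rw [Ideal.mem_span_singleton, dvd_prime_pow hF.prime] at hk
  obtain ⟨i, -, hi⟩ := hk
  have hmd := hm.totalDegree hm0
  rcases Nat.eq_zero_or_pos i with rfl | hi0
  · rw [pow_zero, associated_one_iff_isUnit, isUnit_iff_totalDegree_of_isReduced] at hi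
    omega
  · have := totalDegree_le_of_dvd_of_isDomain ((dvd_pow_self F hi0.ne').trans hi.symm.dvd) hm0
    rw [hF4.totalDegree hF.ne_zero] at this
    omega

/-- The polar form of a quadratic form given as a polynomial. Being assembled monomial by monomial,
it exists in every characteristic; its symmetry follows from the identity itself. -/
lemma exists_polar {q : MvPolynomial (Fin 4) K} (hq : q.IsHomogeneous 2) :
    ∃ B : LinearMap.BilinForm K (Fin 4 → K),
      ∀ u w, eval (u + w) q = eval u q + eval w q + B u w := by
  have key : ∀ d ∈ q.support, ∃ B : LinearMap.BilinForm K (Fin 4 → K), ∀ u w,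
      eval (u + w) (monomial d (coeff d q)) = eval u (monomial d (coeff d q))
        + eval w (monomial d (coeff d q)) + B u w := by
    intro d hd
    have h1 : d.degree = 2 := degree_of_mem_support hq hd
    have h2 : (Finsupp.toMultiset d).card = 2 := by
      rw [Finsupp.card_toMultiset]; exact h1
    obtain ⟨i, j, hij⟩ := Multiset.card_eq_two.mp h2
    have h3 : d = Finsupp.single i 1 + Finsupp.single j 1 := by
      apply Multiset.toFinsupp.symm.injective
      change Finsupp.toMultiset d = Finsupp.toMultiset _
      rw [hij, map_add]; simp
    have h4 : (monomial d (coeff d q) : MvPolynomial (Fin 4) K) = C (coeff d q) * X i * X j := by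
      conv_lhs => rw [h3]
      rw [X, X, C_mul_monomial, monomial_mul, ← h3]
      simp
    refine ⟨LinearMap.mk₂ K (fun u w => coeff d q * (u i * w j + w i * u j)) ?_ ?_ ?_ ?_, ?_⟩
    · intros; simp; ring
    · intros; simp; ring
    · intros; simp; ring
    · intros; simp; ring
    · intro u w
      rw [h4]; simp; ring
  choose! B hB using key
  refine ⟨∑ d ∈ q.support, B d, fun u w => ?_⟩
  have hs : ∀ x, eval x q = ∑ d ∈ q.support, eval x (monomial d (coeff d q)) := by
    intro x
    conv_lhs => rw [q.as_sum]
    rw [map_sum]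
  rw [hs, hs, hs, ← Finset.sum_add_distrib]
  simp only [LinearMap.sum_apply]
  rw [← Finset.sum_add_distrib]
  exact Finset.sum_congr rfl fun d hd => hB d hd u w

/-! ### The tangent cone at a double point -/

/-- The constant coefficient of a quadratic polynomial function vanishing outside `0` and `-1` is
zero. -/
lemma eq_zero_of_forall [Infinite K] {a b c : K}
    (h : ∀ t : K, t ≠ 0 → 1 + t ≠ 0 → a + t * b + t ^ 2 * c = 0) : a = 0 := by
  have h0 : ((Polynomial.C a + Polynomial.X * Polynomial.C b + Polynomial.X ^ 2 * Polynomial.C c)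
      * (Polynomial.X * (Polynomial.C 1 + Polynomial.X)) : Polynomial K) = 0 := by
    apply Polynomial.funext
    intro t
    by_cases ht : t = 0
    · simp [ht]
    by_cases ht1 : 1 + t = 0
    · simp [ht1]
    have h3 := h t ht ht1
    simp only [Polynomial.eval_mul, Polynomial.eval_add, Polynomial.eval_C, Polynomial.eval_X,
      Polynomial.eval_pow, h3, zero_mul, Polynomial.eval_zero]
  have h1 : (Polynomial.X * (Polynomial.C 1 + Polynomial.X) : Polynomial K) ≠ 0 := by
    refine mul_ne_zero Polynomial.X_ne_zero ?_
    rw [add_comm]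
    exact Polynomial.X_add_C_ne_zero 1
  have h2 := (mul_eq_zero.mp h0).resolve_right h1
  simpa using congrArg (Polynomial.eval 0) h2

/-- The equation `q` of the tangent cone at a double point represented by `v`: the degree `2` part
of `F (v + X)`. -/
lemma exists_tangentCone {F : MvPolynomial (Fin 4) K} (hF4 : F.IsHomogeneous 4) {v : Fin 4 → K}
    (h1 : ∀ d : Fin 4 →₀ ℕ, (d.sum fun _ n => n) < 2 →
      coeff d (aeval (fun i => X i + C (v i)) F : MvPolynomial (Fin 4) K) = 0)
    (h2 : ∃ d : Fin 4 →₀ ℕ, (d.sum fun _ n => n) = 2 ∧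
      coeff d (aeval (fun i => X i + C (v i)) F : MvPolynomial (Fin 4) K) ≠ 0) :
    ∃ q : MvPolynomial (Fin 4) K, q.IsHomogeneous 2 ∧ q ≠ 0 ∧ ∀ w, ∃ c d : K, ∀ t : K,
      eval (v + t • w) F = t ^ 2 * eval w q + t ^ 3 * c + t ^ 4 * d := by
  set G : MvPolynomial (Fin 4) K := aeval (fun i => X i + C (v i)) F with hG
  have hdeg : G.totalDegree ≤ 4 := by
    rw [hG, F.as_sum, map_sum]
    refine totalDegree_finsetSum_le fun d hd => ?_
    have hd4 : d.degree = 4 := degree_of_mem_support hF4 hd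
    rw [aeval_monomial]
    refine (totalDegree_mul _ _).trans ?_
    rw [algebraMap_eq, totalDegree_C, zero_add]
    refine le_trans ?_ hd4.le
    rw [Finsupp.degree_apply]
    refine (totalDegree_finsetProd _ _).trans (Finset.sum_le_sum fun i _ => ?_)
    refine (totalDegree_pow _ _).trans ?_
    have : (X i + C (v i) : MvPolynomial (Fin 4) K).totalDegree ≤ 1 := by
      refine (totalDegree_add _ _).trans ?_
      simp
    nlinarith
  have hcomp : ∀ k < 2, homogeneousComponent k G = 0 := by
    intro k hk
    refine homogeneousComponent_eq_zero' k G fun d hd hdk => ?_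
    exact mem_support_iff.mp hd (h1 d (by rw [← hdk] at hk; exact hk))
  have hsum : G = ∑ k ∈ Finset.range 5, homogeneousComponent k G := by
    conv_lhs => rw [← sum_homogeneousComponent G]
    refine Finset.sum_subset (by intro x; simp; omega) fun k _ hk => ?_
    refine homogeneousComponent_eq_zero k G (by simp at hk; omega)
  refine ⟨homogeneousComponent 2 G, homogeneousComponent_isHomogeneous 2 G, ?_, fun w =>
    ⟨eval w (homogeneousComponent 3 G), eval w (homogeneousComponent 4 G), fun t => ?_⟩⟩
  · obtain ⟨d, hd, hd'⟩ := h2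
    intro h0
    apply hd'
    have := coeff_homogeneousComponent 2 G d
    rw [h0, if_pos (show d.degree = 2 from hd)] at this
    simpa using this.symm
  · have he : eval (v + t • w) F = eval (t • w) G := by
      have : (eval (v + t • w) : MvPolynomial (Fin 4) K →+* K) = (eval (t • w)).comp
          (aeval (fun i => X i + C (v i)) : MvPolynomial (Fin 4) K →ₐ[K] _).toRingHom := by
        apply ringHom_ext
        · intro r; simp
        · intro i; simp [add_comm]
      rw [this]; rfl
    rw [he]
    conv_lhs => rw [hsum]
    rw [map_sum]
    simp only [Finset.sum_range_succ, Finset.sum_range_zero, hcomp 0 (by norm_num),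
      hcomp 1 (by norm_num), map_zero, zero_add,
      eval_smul_of_isHomogeneous (homogeneousComponent_isHomogeneous _ G), mul_zero]

/-! ### Planes and bases in `K⁴` -/

/-- A subspace of codimension one in `U` is completed to `U` by a single vector. -/
lemma exists_compl_one {A U : Submodule K (Fin 4 → K)} (hAU : A ≤ U)
    (h : Module.finrank K A + 1 = Module.finrank K U) :
    ∃ b ∈ U, ∀ u ∈ U, ∃ t : K, u - t • b ∈ A := by
  have hlt : A < U := lt_of_le_of_ne hAU (by rintro rfl; omega)
  obtain ⟨b, hbU, hbA⟩ := SetLike.exists_of_lt hlt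
  refine ⟨b, hbU, fun u hu => ?_⟩
  have hle : A ⊔ Submodule.span K {b} ≤ U :=
    sup_le hAU (by rwa [Submodule.span_singleton_le_iff_mem])
  have hlt' : A < A ⊔ Submodule.span K {b} := by
    refine lt_of_le_of_ne le_sup_left fun h' => hbA ?_
    rw [h']
    exact Submodule.mem_sup_right (Submodule.mem_span_singleton_self b)
  have := Submodule.finrank_lt_finrank_of_lt hlt'
  have heq := Submodule.eq_of_le_of_finrank_le hle (by omega)
  rw [← heq, Submodule.mem_sup] at hu
  obtain ⟨y, hy, z, hz, rfl⟩ := hu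
  obtain ⟨t, rfl⟩ := Submodule.mem_span_singleton.mp hz
  exact ⟨t, by simpa using hy⟩

lemma finrank_span_pair {v u : Fin 4 → K} (hv : v ≠ 0) (hu : u ∉ Submodule.span K {v}) :
    Module.finrank K (Submodule.span K {v, u}) = 2 := by
  have hli : LinearIndependent K ![v, u] := by
    rw [LinearIndependent.pair_iff]
    intro s t hst
    have ht : t = 0 := by
      by_contra ht
      apply hu
      rw [Submodule.mem_span_singleton]
      refine ⟨-(t⁻¹ * s), ?_⟩
      have : s • v = -(t • u) := eq_neg_of_add_eq_zero_left hst
      rw [neg_smul, mul_smul, this, smul_neg, neg_neg, inv_smul_smul₀ ht]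
    rw [ht, zero_smul, add_zero] at hst
    exact ⟨(smul_eq_zero.mp hst).resolve_right hv, ht⟩
  have := finrank_span_eq_card hli
  rwa [Matrix.range_cons_cons_empty, Fintype.card_fin] at this

lemma eq_span_pair {W : Submodule K (Fin 4 → K)} (hW : Module.finrank K W = 2)
    {v u : Fin 4 → K} (hv : v ≠ 0) (hvW : v ∈ W) (huW : u ∈ W) (hu : u ∉ Submodule.span K {v}) :
    W = Submodule.span K {v, u} := by
  refine (Submodule.eq_of_le_of_finrank_le ?_ ?_).symm
  · rw [Submodule.span_le]
    rintro x (rfl | rfl)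
    · exact hvW
    · exact huW
  · rw [hW, finrank_span_pair hv hu]

lemma exists_mem_not_mem_span {W : Submodule K (Fin 4 → K)} (hW : Module.finrank K W = 2)
    (v : Fin 4 → K) : ∃ u ∈ W, u ∉ Submodule.span K {v} := by
  by_contra! h
  have h1 := Submodule.finrank_mono (show W ≤ Submodule.span K {v} from h)
  have h2 := finrank_span_finset_le_card (R := K) ({v} : Finset (Fin 4 → K))
  simp only [Finset.coe_singleton, Finset.card_singleton] at h2
  change Module.finrank K (Submodule.span K {v}) ≤ 1 at h2
  omega

/-! ### Zeros of a quartic on a rational curve -/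

/-- A family of planes, each the value of `f` at a parameter `r` at which the quartic `F` vanishes
along the curve `ψ` of degree at most `k`, has at most `4 * k` members, unless `F` vanishes
identically on `ψ`. -/
lemma encard_le_of_curve {F : MvPolynomial (Fin 4) K} (hF4 : F.IsHomogeneous 4)
    {k : ℕ} (ψ : Fin 4 → Polynomial K) (hψ : ∀ i, (ψ i).natDegree ≤ k)
    (hne : ∃ r : K, eval (fun i => (ψ i).eval r) F ≠ 0)
    (f : K → Submodule K (Fin 4 → K)) (S : Set (Submodule K (Fin 4 → K)))
    (hS : ∀ W ∈ S, ∃ r : K, eval (fun i => (ψ i).eval r) F = 0 ∧ W = f r) :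
    S.encard ≤ (4 * k : ℕ) := by
  classical
  have he : ∀ r : K, (aeval ψ F).eval r = eval (fun i => (ψ i).eval r) F := by
    intro r
    have : (Polynomial.evalRingHom r).comp
        (aeval ψ : MvPolynomial (Fin 4) K →ₐ[K] Polynomial K).toRingHom
        = (eval (fun i => (ψ i).eval r) : MvPolynomial (Fin 4) K →+* K) := by
      apply ringHom_ext
      · intro r; simp
      · intro i; simp
    rw [← this]; rfl
  have hp : aeval ψ F ≠ 0 := by
    intro h0
    obtain ⟨r, hr⟩ := hne
    rw [← he, h0] at hr
    simp at hr
  have hsub : S ⊆ f '' ((aeval ψ F).roots.toFinset : Set K) := by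
    intro W hW
    obtain ⟨r, hr, rfl⟩ := hS W hW
    refine ⟨r, ?_, rfl⟩
    simp [hp, he, hr]
  calc S.encard ≤ _ := Set.encard_le_encard hsub
    _ ≤ _ := Set.encard_image_le _ _
    _ = ((aeval ψ F).roots.toFinset.card : ℕ∞) := Set.encard_coe_eq_coe_finsetCard _
    _ ≤ _ := by
      norm_cast
      refine (Multiset.toFinset_card_le _).trans ((Polynomial.card_roots' _).trans ?_)
      refine aeval_natDegree_le F ?_ ψ hψ
      by_cases hF : F = 0
      · simp [hF]
      · rw [hF4.totalDegree hF]

/-- A form not vanishing at the point at infinity `a` of the parabola `r ↦ r² a + r b + c` does not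
vanish identically on it: substitute `r⁻¹` for `r`. -/
lemma exists_ne_zero_on_parabola [Infinite K] {F : MvPolynomial (Fin 4) K}
    (hF4 : F.IsHomogeneous 4) {a : Fin 4 → K} (b c : Fin 4 → K) (ha : eval a F ≠ 0) :
    ∃ r : K, eval (r ^ 2 • a + r • b + c) F ≠ 0 := by
  by_contra! h
  set ψ : Fin 4 → Polynomial K := fun i =>
    Polynomial.C (a i) + Polynomial.X * Polynomial.C (b i) + Polynomial.X ^ 2 * Polynomial.C (c i)
  have he : ∀ r : K, (aeval ψ F).eval r = eval (a + r • b + r ^ 2 • c) F := by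
    intro r
    have : (Polynomial.evalRingHom r).comp
        (aeval ψ : MvPolynomial (Fin 4) K →ₐ[K] Polynomial K).toRingHom
        = (eval (a + r • b + r ^ 2 • c) : MvPolynomial (Fin 4) K →+* K) := by
      apply ringHom_ext
      · intro r; simp
      · intro i; simp [ψ]; ring
    rw [← this]; rfl
  have h0 : aeval ψ F * Polynomial.X = 0 := by
    apply Polynomial.funext
    intro r
    by_cases hr : r = 0
    · simp [hr]
    have h1 : a + r • b + r ^ 2 • c = r ^ 2 • ((r⁻¹) ^ 2 • a + r⁻¹ • b + c) := by
      ext i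
      simp only [Pi.add_apply, Pi.smul_apply, smul_eq_mul]
      field_simp
    rw [Polynomial.eval_mul, he, h1, eval_smul_of_isHomogeneous hF4, h]
    simp
  have h1 := (mul_eq_zero.mp h0).resolve_right Polynomial.X_ne_zero
  have h2 := he 0
  rw [h1] at h2
  apply ha
  simpa using h2.symm

/-! ### Lines on a reducible tangent cone -/

/-- The lines through the point represented by `v` on the surface `{F = 0}`, each encoded as a
two-dimensional linear subspace of `K⁴` containing `v`. -/
def LinesThrough (F : MvPolynomial (Fin 4) K) (v : Fin 4 → K) : Set (Submodule K (Fin 4 → K)) :=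
  {W | Module.finrank K W = 2 ∧ v ∈ W ∧ ∀ w ∈ W, eval w F = 0}

lemma not_mem_span_singleton {F : MvPolynomial (Fin 4) K} (hF4 : F.IsHomogeneous 4)
    {v w : Fin 4 → K} (hFv : eval v F = 0) (hw : eval w F ≠ 0) : w ∉ Submodule.span K {v} := by
  intro h
  obtain ⟨t, rfl⟩ := Submodule.mem_span_singleton.mp h
  rw [eval_smul_of_isHomogeneous hF4, hFv, mul_zero] at hw
  exact hw rfl

/-- At most four of the lines lie in a given plane. -/
lemma encard_linesThrough_plane [IsAlgClosed K] {F : MvPolynomial (Fin 4) K} (hF : Irreducible F)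
    (hF4 : F.IsHomogeneous 4) {v : Fin 4 → K} (hv : v ≠ 0) (hFv : eval v F = 0)
    {l : Module.Dual K (Fin 4 → K)} (hl : l ≠ 0) :
    {W ∈ LinesThrough F v | W ≤ LinearMap.ker l}.encard ≤ 4 := by
  have : Infinite K := IsAlgClosed.instInfinite
  by_cases hlv : l v = 0
  swap
  -- A plane not through the point contains no line through it.
  · have : {W ∈ LinesThrough F v | W ≤ LinearMap.ker l} = ∅ := by
      rw [Set.eq_empty_iff_forall_notMem]
      rintro W ⟨⟨-, hvW, -⟩, hWl⟩
      exact hlv (hWl hvW)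
    rw [this]; simp
  obtain ⟨w₀, hlw, hFw⟩ : ∃ w, l w = 0 ∧ eval w F ≠ 0 := by
    set m : MvPolynomial (Fin 4) K := ∑ i, C (l (Pi.single i 1)) * X i
    have hm : ∀ w, eval w m = l w := by
      intro w
      conv_rhs => rw [pi_eq_sum_univ' w]
      simp [m, map_sum, mul_comm]
    have hm0 : m ≠ 0 := by
      rintro h0
      apply hl
      refine LinearMap.ext fun w => ?_
      rw [← hm, h0]; simp
    have hm1 : m.IsHomogeneous 1 := by
      refine IsHomogeneous.sum _ _ _ fun i _ => ?_
      exact isHomogeneous_C_mul_X _ i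
    obtain ⟨w, h1, h2⟩ := exists_zero_and_ne_zero hF hF4 hm1 hm0 le_rfl (by norm_num)
    exact ⟨w, by rw [← hm, h1], h2⟩
  have hwv := not_mem_span_singleton hF4 hFv hFw
  have hrank := Module.Dual.finrank_ker_add_one_of_ne_zero hl
  rw [Module.finrank_fin_fun] at hrank
  obtain ⟨a, -, ha⟩ := exists_compl_one (A := Submodule.span K {v, w₀}) (U := LinearMap.ker l)
    (by
      rw [Submodule.span_le]
      rintro x (rfl | rfl)
      · exact hlv
      · exact hlw)
    (by rw [finrank_span_pair hv hwv]; omega)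
  have hcurve : ∀ r : K, (fun i => (Polynomial.X * Polynomial.C (w₀ i)
      + Polynomial.C (a i)).eval r) = r • w₀ + a := by
    intro r; ext i; simp; ring
  refine encard_le_of_curve (k := 1) hF4
    (fun i => Polynomial.X * Polynomial.C (w₀ i) + Polynomial.C (a i)) ?_ ?_
    (fun r => Submodule.span K {v, r • w₀ + a}) _ ?_
  · intro i; compute_degree
  · obtain ⟨r, hr⟩ := exists_ne_zero_on_parabola hF4 a 0 hFw
    refine ⟨r, ?_⟩
    rw [hcurve]
    intro h0
    apply hr
    have : r ^ 2 • w₀ + r • a + 0 = r • (r • w₀ + a) := by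
      rw [smul_add, smul_smul, sq, add_zero]
    rw [this, eval_smul_of_isHomogeneous hF4, h0, mul_zero]
  · rintro W ⟨⟨hW2, hvW, hWF⟩, hWl⟩
    obtain ⟨u, huW, huv⟩ := exists_mem_not_mem_span hW2 v
    obtain ⟨z, hz⟩ := ha u (hWl huW)
    obtain ⟨x, y, hxy⟩ := Submodule.mem_span_pair.mp hz
    have hu : u - x • v = y • w₀ + z • a := by
      linear_combination (exp := 1) -hxy
    have huxW : u - x • v ∈ W := W.sub_mem huW (W.smul_mem x hvW)
    have huxv : u - x • v ∉ Submodule.span K {v} := fun h => huv <| by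
      simpa using Submodule.add_mem _ h
        (Submodule.smul_mem _ x (Submodule.mem_span_singleton_self v))
    -- Otherwise `w₀ ∈ W`, although `F` does not vanish at `w₀`.
    have hz0 : z ≠ 0 := by
      rintro rfl
      rw [zero_smul, add_zero] at hu
      have := hWF _ huxW
      rw [hu, eval_smul_of_isHomogeneous hF4, mul_eq_zero, or_iff_left hFw] at this
      rw [hu, pow_eq_zero_iff (by norm_num) |>.mp this, zero_smul] at huxv
      exact huxv (Submodule.zero_mem _)
    have hu' : (z⁻¹ * y) • w₀ + a = z⁻¹ • (u - x • v) := by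
      rw [hu, smul_add, smul_smul, inv_smul_smul₀ hz0]
    have hmem : (z⁻¹ * y) • w₀ + a ∈ W := by
      rw [hu']; exact W.smul_mem _ huxW
    refine ⟨z⁻¹ * y, ?_, eq_span_pair hW2 hv hvW hmem ?_⟩
    · rw [hcurve]; exact hWF _ hmem
    · rw [hu']
      intro h
      exact huxv (by simpa [smul_smul, hz0] using Submodule.smul_mem _ z h)

/-- The bound when the lines lie in the union of two planes. -/
lemma encard_linesThrough_of_split [IsAlgClosed K] {F : MvPolynomial (Fin 4) K}
    (hF : Irreducible F)
    (hF4 : F.IsHomogeneous 4) {v : Fin 4 → K} (hv : v ≠ 0) (hFv : eval v F = 0)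
    {l₁ l₂ : Module.Dual K (Fin 4 → K)} (hl₁ : l₁ ≠ 0) (hl₂ : l₂ ≠ 0)
    (hl : ∀ W ∈ LinesThrough F v, ∀ w ∈ W, l₁ w * l₂ w = 0) :
    (LinesThrough F v).encard ≤ 8 := by
  have hsub : LinesThrough F v ⊆ {W ∈ LinesThrough F v | W ≤ LinearMap.ker l₁} ∪
      {W ∈ LinesThrough F v | W ≤ LinearMap.ker l₂} := by
    intro W hW
    by_contra hcon
    simp only [Set.mem_union, Set.mem_ofPred_eq, hW, true_and, not_or, SetLike.not_le_iff_exists,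
      LinearMap.mem_ker] at hcon
    obtain ⟨⟨a, haW, ha⟩, b, hbW, hb⟩ := hcon
    have h1 := (mul_eq_zero.mp (hl W hW a haW)).resolve_left ha
    have h2 := (mul_eq_zero.mp (hl W hW b hbW)).resolve_right hb
    have h3 := hl W hW _ (W.add_mem haW hbW)
    rw [map_add, map_add, h1, h2, add_zero, zero_add] at h3
    exact mul_ne_zero ha hb h3
  calc _ ≤ _ := Set.encard_le_encard hsub
    _ ≤ _ := Set.encard_union_le _ _
    _ ≤ 4 + 4 := add_le_add (encard_linesThrough_plane hF hF4 hv hFv hl₁)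
        (encard_linesThrough_plane hF hF4 hv hFv hl₂)
    _ = 8 := by norm_num

/-! ### Lines on an irreducible tangent cone -/

/-- The bound when the tangent cone is `x y + e z² = 0` with `e ≠ 0`, in coordinates for which
`w₀` is a point of the cone outside the surface. Such a line has `y ≠ 0`, as the only line of the
cone with `y = 0` passes through `w₀`; normalizing `y = 1` gives `x = -e z²`. -/
lemma encard_linesThrough_of_smooth [IsAlgClosed K] {F : MvPolynomial (Fin 4) K}
    (hF4 : F.IsHomogeneous 4) {v w₀ a b : Fin 4 → K} (hv : v ≠ 0) (hFw : eval w₀ F ≠ 0) {e : K}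
    (he : e ≠ 0)
    (hspan : ∀ u : Fin 4 → K, ∃ s x y z : K, u = s • v + (x • w₀ + y • a + z • b))
    (hq : ∀ s x y z : K, s • v + (x • w₀ + y • a + z • b) ∉ Submodule.span K {v} →
      ∀ W ∈ LinesThrough F v, s • v + (x • w₀ + y • a + z • b) ∈ W → x * y + e * z ^ 2 = 0) :
    (LinesThrough F v).encard ≤ 8 := by
  have : Infinite K := IsAlgClosed.instInfinite
  have hcurve : ∀ r : K, (fun i => (Polynomial.X ^ 2 * Polynomial.C (-e * w₀ i)
      + Polynomial.X * Polynomial.C (b i) + Polynomial.C (a i)).eval r)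
      = r ^ 2 • (-e) • w₀ + r • b + a := by
    intro r; ext i; simp; ring
  refine encard_le_of_curve (k := 2) hF4
    (fun i => Polynomial.X ^ 2 * Polynomial.C (-e * w₀ i)
      + Polynomial.X * Polynomial.C (b i) + Polynomial.C (a i)) ?_ ?_
    (fun r => Submodule.span K {v, r ^ 2 • (-e) • w₀ + r • b + a}) _ ?_
  · intro i; compute_degree
  · have h1 : eval ((-e) • w₀) F ≠ 0 := by
      rw [eval_smul_of_isHomogeneous hF4]
      exact mul_ne_zero (pow_ne_zero _ (neg_ne_zero.mpr he)) hFw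
    obtain ⟨r, hr⟩ := exists_ne_zero_on_parabola hF4 b a h1
    exact ⟨r, by rwa [hcurve]⟩
  · intro W hW
    obtain ⟨hW2, hvW, hWF⟩ := id hW
    obtain ⟨u, huW, huv⟩ := exists_mem_not_mem_span hW2 v
    obtain ⟨s, x, y, z, rfl⟩ := hspan u
    have hxyz := hq s x y z huv W hW huW
    have hu'W : x • w₀ + y • a + z • b ∈ W :=
      (W.add_mem_iff_right (W.smul_mem s hvW)).mp huW
    have hu'v : x • w₀ + y • a + z • b ∉ Submodule.span K {v} := fun h => huv <|
      Submodule.add_mem _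
        (Submodule.smul_mem _ s (Submodule.mem_span_singleton_self v)) h
    have hy : y ≠ 0 := by
      rintro rfl
      have hz : z = 0 := by simpa [he] using hxyz
      subst hz
      rw [zero_smul, zero_smul, add_zero, add_zero] at hu'W hu'v
      have := hWF _ hu'W
      rw [eval_smul_of_isHomogeneous hF4, mul_eq_zero, or_iff_left hFw] at this
      rw [pow_eq_zero_iff (by norm_num) |>.mp this, zero_smul] at hu'v
      exact hu'v (Submodule.zero_mem _)
    have hx : (y⁻¹ * z) ^ 2 * (-e) = y⁻¹ * x := by
      field_simp
      linear_combination -hxyz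
    have hu' : (y⁻¹ * z) ^ 2 • (-e) • w₀ + (y⁻¹ * z) • b + a
        = y⁻¹ • (x • w₀ + y • a + z • b) := by
      rw [smul_smul, hx, smul_add, smul_add, inv_smul_smul₀ hy, smul_smul, smul_smul]
      abel
    have hmem : (y⁻¹ * z) ^ 2 • (-e) • w₀ + (y⁻¹ * z) • b + a ∈ W := by
      rw [hu']; exact W.smul_mem _ hu'W
    refine ⟨y⁻¹ * z, ?_, eq_span_pair hW2 hv hvW hmem ?_⟩
    · rw [hcurve]; exact hWF _ hmem
    · rw [hu']
      intro h
      apply hu'v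
      have := Submodule.smul_mem _ y h
      rwa [smul_inv_smul₀ hy] at this

/-! ### Classification of the tangent cone -/

/-- The bound for any quadratic form `q` occurring as the leading part of `F` at `v`. -/
lemma encard_linesThrough_le [IsAlgClosed K] (h2 : (2 : K) ≠ 0) {F q : MvPolynomial (Fin 4) K}
    (hF : Irreducible F) (hF4 : F.IsHomogeneous 4) {v : Fin 4 → K} (hv : v ≠ 0)
    (hFv : eval v F = 0) (hq2 : q.IsHomogeneous 2) (hq0 : q ≠ 0)
    (hexp : ∀ w, ∃ c d : K, ∀ t : K,
      eval (v + t • w) F = t ^ 2 * eval w q + t ^ 3 * c + t ^ 4 * d) :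
    (LinesThrough F v).encard ≤ 8 := by
  have : Infinite K := IsAlgClosed.instInfinite
  have hqsmul := fun t w => eval_smul_of_isHomogeneous hq2 t w
  -- A line through `v` on the surface lies on the tangent cone.
  have hqW : ∀ W ∈ LinesThrough F v, ∀ w ∈ W, eval w q = 0 := by
    rintro W ⟨-, hvW, hWF⟩ w hw
    obtain ⟨c, d, h⟩ := hexp w
    refine eq_zero_of_forall (b := c) (c := d) fun t ht _ => ?_
    have h1 := h t
    rw [hWF _ (W.add_mem hvW (W.smul_mem t hw))] at h1
    exact (mul_eq_zero.mp (show t ^ 2 * _ = 0 by linear_combination -h1)).resolve_left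
      (pow_ne_zero 2 ht)
  -- The tangent cone is a cone with vertex `v`.
  have hqv : ∀ w, eval (v + w) q = eval w q := by
    intro w
    obtain ⟨c, d, h⟩ := hexp w
    obtain ⟨c', d', h'⟩ := hexp (v + w)
    -- Compare the `t²` coefficients of the expansions of `F` at
    -- `v + t (v + w) = (1 + t) (v + t / (1 + t) w)`.
    rw [← sub_eq_zero]
    refine eq_zero_of_forall (b := c' - 2 * eval w q - c) (c := d' - eval w q - c - d)
      fun t ht ht1 => ?_
    have h1 : v + t • (v + w) = (1 + t) • (v + (t / (1 + t)) • w) := by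
      rw [smul_add (1 + t), smul_smul, mul_div_cancel₀ _ ht1]
      module
    have h3 := h' t
    rw [h1, eval_smul_of_isHomogeneous hF4, h] at h3
    have h4 : (1 + t) ^ 4 * ((t / (1 + t)) ^ 2 * eval w q + (t / (1 + t)) ^ 3 * c
        + (t / (1 + t)) ^ 4 * d)
        = t ^ 2 * ((1 + t) ^ 2 * eval w q + t * (1 + t) * c + t ^ 2 * d) := by
      field_simp
    rw [h4] at h3
    refine (mul_eq_zero.mp (show t ^ 2 * _ = 0 from ?_)).resolve_left (pow_ne_zero 2 ht)
    linear_combination -h3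
  obtain ⟨B, hB⟩ := exists_polar hq2
  have hBs : ∀ u w, B u w = B w u := fun u w => by
    have h3 := hB u w
    rw [add_comm, hB w u] at h3
    linear_combination -h3
  have hBB : ∀ w, B w w = 2 * eval w q := fun w => by
    have h3 := hB w w
    rw [← two_smul K w, hqsmul] at h3
    linear_combination -h3
  have hv0 : eval v q = 0 := by
    have h3 := hqv 0
    rw [add_zero] at h3
    rw [h3]
    simpa using hqsmul 0 0
  have hBv : ∀ w, B w v = 0 := fun w => by
    rw [hBs]
    have h3 := hB v w
    rw [hqv, hv0] at h3
    linear_combination -h3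
  have hcomb : ∀ x y u w, eval (x • u + y • w) q
      = x ^ 2 * eval u q + y ^ 2 * eval w q + x * y * B u w := by
    intro x y u w
    rw [hB, hqsmul, hqsmul]
    simp
    ring
  -- Factorization of `q` into linear forms suffices.
  have hsplit : ∀ l₁ l₂ : Module.Dual K (Fin 4 → K), (∀ w, eval w q = l₁ w * l₂ w) →
      (LinesThrough F v).encard ≤ 8 := by
    intro l₁ l₂ hl
    refine encard_linesThrough_of_split hF hF4 hv hFv (l₁ := l₁) (l₂ := l₂) ?_ ?_ ?_
    · rintro rfl
      exact hq0 (MvPolynomial.funext fun w => by simp [hl])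
    · rintro rfl
      exact hq0 (MvPolynomial.funext fun w => by simp [hl])
    · intro W hW w hw
      rw [← hl]; exact hqW W hW w hw
  obtain ⟨w₀, hw₀, hFw⟩ := exists_zero_and_ne_zero hF hF4 hq2 hq0 (by norm_num) (by norm_num)
  have hwv := not_mem_span_singleton hF4 hFv hFw
  have hBww : B w₀ w₀ = 0 := by rw [hBB, hw₀, mul_zero]
  by_cases hBw : B w₀ = 0
  · -- The radical of `q` contains `v` and `w₀`.
    obtain ⟨w, hw⟩ : ∃ w, eval w q ≠ 0 := by
      by_contra! h
      exact hq0 (MvPolynomial.funext fun w => by simp [h])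
    have hBw0 : B w ≠ 0 := by
      intro h
      have h3 := hBB w
      rw [h] at h3
      exact mul_ne_zero h2 hw h3.symm
    have hrank := Module.Dual.finrank_ker_add_one_of_ne_zero hBw0
    rw [Module.finrank_fin_fun] at hrank
    have hw₀B : ∀ u, B u w₀ = 0 := fun u => by rw [hBs, hBw]; rfl
    obtain ⟨b, hb, hbU⟩ := exists_compl_one (A := Submodule.span K {v, w₀})
      (U := LinearMap.ker (B w))
      (by
        rw [Submodule.span_le]
        rintro x (rfl | rfl)
        · exact hBv w
        · exact hw₀B w)
      (by rw [finrank_span_pair hv hwv]; omega)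
    have hb : B w b = 0 := hb
    -- Modulo the radical, `q` is diagonal in `w, b`, and it splits as a difference of two squares.
    -- If `q(b) = 0` then `β = 0` by `1 / 0 = 0`, which is the correct value, as then `B b = 0`.
    obtain ⟨α, hα⟩ := IsAlgClosed.exists_pow_nat_eq (1 / (4 * eval w q)) (n := 2) (by norm_num)
    obtain ⟨β, hβ⟩ := IsAlgClosed.exists_pow_nat_eq (-(1 / (4 * eval b q))) (n := 2) (by norm_num)
    have h4 : (4 : K) ≠ 0 := by
      rw [show (4 : K) = 2 * 2 by norm_num]; exact mul_ne_zero h2 h2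
    refine hsplit (α • B w + β • B b) (α • B w - β • B b) fun u => ?_
    obtain ⟨z, hz⟩ := hbU (u - (B w u / (2 * eval w q)) • w) (by
      rw [LinearMap.mem_ker, map_sub, map_smul, hBB, smul_eq_mul,
        div_mul_cancel₀ _ (mul_ne_zero h2 hw), sub_self])
    set y := B w u / (2 * eval w q) with hy
    obtain ⟨s, x, hsx⟩ := Submodule.mem_span_pair.mp hz
    have hu : u = s • v + (x • w₀ + (y • w + z • b)) := by
      linear_combination (exp := 1) -hsx
    have hwu : B w u = 2 * y * eval w q := by
      rw [hy]; field_simp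
    have hbu : B b u = 2 * z * eval b q := by
      rw [hu]
      simp only [map_add, map_smul, hBv, hw₀B, hBs b w, hb, hBB, smul_eq_mul]
      ring
    have hqu : eval u q = y ^ 2 * eval w q + z ^ 2 * eval b q := by
      have e1 : ∀ r, B (s • v) r = 0 := fun r => by rw [hBs, map_smul, hBv, smul_zero]
      have e2 : ∀ r, B (x • w₀) r = 0 := fun r => by rw [hBs, map_smul, hw₀B, smul_zero]
      rw [hu, hB, hB, hqsmul, hqsmul, hv0, hw₀, e1, e2, hcomb, hb]
      simp
    have hβ' : β ^ 2 * (B b u) ^ 2 = - (z ^ 2 * eval b q) := by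
      rw [hβ, hbu]
      by_cases h0 : eval b q = 0
      · simp [h0]
      · field_simp
        ring
    have hα' : α ^ 2 * (B w u) ^ 2 = y ^ 2 * eval w q := by
      rw [hα, hwu]
      field_simp
      ring
    rw [hqu]
    simp only [LinearMap.add_apply, LinearMap.sub_apply, LinearMap.smul_apply, smul_eq_mul]
    linear_combination hβ' - hα'
  -- `w₀` is a smooth point of the cone: complete it to a hyperbolic pair `w₀, a` and let `b` be
  -- orthogonal to both.
  · obtain ⟨a, ha, haq⟩ : ∃ a, B w₀ a = 1 ∧ eval a q = 0 := by
      obtain ⟨a, ha⟩ : ∃ a, B w₀ a ≠ 0 := by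
        by_contra! h
        exact hBw (LinearMap.ext h)
      obtain ⟨a', h1⟩ : ∃ a', B w₀ a' = 1 :=
        ⟨(B w₀ a)⁻¹ • a, by rw [map_smul, smul_eq_mul, inv_mul_cancel₀ ha]⟩
      refine ⟨a' + (-eval a' q) • w₀, ?_, ?_⟩
      · rw [map_add, map_smul, hBww, h1]; simp
      · rw [hB, hqsmul, hw₀, map_smul, hBs, h1]; simp
    have hrank := Module.Dual.finrank_ker_add_one_of_ne_zero hBw
    rw [Module.finrank_fin_fun] at hrank
    obtain ⟨b', hb', hbU⟩ := exists_compl_one (A := Submodule.span K {v, w₀})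
      (U := LinearMap.ker (B w₀))
      (by
        rw [Submodule.span_le]
        rintro x (rfl | rfl)
        · exact hBv w₀
        · exact hBww)
      (by rw [finrank_span_pair hv hwv]; omega)
    have hb' : B w₀ b' = 0 := hb'
    set b := b' - B a b' • w₀ with hb
    have haw : B a w₀ = 1 := by rw [hBs, ha]
    have hwb : B w₀ b = 0 := by rw [hb, map_sub, map_smul, hb', hBww]; simp
    have hab : B a b = 0 := by rw [hb, map_sub, map_smul, haw]; simp
    have hspan : ∀ u : Fin 4 → K, ∃ s x y z : K, u = s • v + (x • w₀ + y • a + z • b) := by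
      intro u
      obtain ⟨z, hz⟩ := hbU (u - B w₀ u • a) (by
        rw [LinearMap.mem_ker, map_sub, map_smul, ha]; simp)
      obtain ⟨s, x, hsx⟩ := Submodule.mem_span_pair.mp hz
      refine ⟨s, x + z * B a b', B w₀ u, z, ?_⟩
      rw [hb, smul_sub, add_smul, mul_smul]
      linear_combination (exp := 1) -hsx
    have hform : ∀ s x y z : K, eval (s • v + (x • w₀ + y • a + z • b)) q
        = x * y + eval b q * z ^ 2 := by
      intro s x y z
      rw [hB, hqsmul, hv0, hBs, map_smul, hBv, hB, hcomb, hqsmul, hw₀, haq, ha, map_smul,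
        hBs _ b, map_add, map_smul, map_smul, hBs b, hBs b, hwb, hab]
      simp
      ring
    by_cases he : eval b q = 0
    · refine hsplit (B a) (B w₀) fun u => ?_
      obtain ⟨s, x, y, z, rfl⟩ := hspan u
      rw [hform, he]
      simp only [map_add, map_smul, hBv, haw, hab, hBB, haq, hw₀, ha, hwb, smul_eq_mul]
      ring
    · refine encard_linesThrough_of_smooth hF4 hv hFw he hspan fun s x y z _ W hW hu => ?_
      rw [← hform s x y z]
      exact hqW W hW _ hu

/-! ### Lines through a double point -/

/-- If `F` is an irreducible quartic form and `P` is a double point of `X = {F = 0}`,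
then at most 8 lines lying on `X` pass through `P`. -/
theorem statement3 (K : Type*) [Field K] [IsAlgClosed K] [CharP K 3]
    (F : MvPolynomial (Fin 4) K) (hFirr : Irreducible F) (hF4 : F.IsHomogeneous 4)
    (P : Pt K) (hP : IsDoublePoint F P) :
    {ℓ | ℓ ∈ LinesOn F ∧ P ∈ ℓ}.encard ≤ 8 := by
  have h2 : (2 : K) ≠ 0 := by
    intro h
    have : ((2 : ℕ) : K) = 0 := by exact_mod_cast h
    rw [CharP.cast_eq_zero_iff K 3] at this
    omega
  have hvP : P.rep ∈ P.submodule := by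
    rw [Projectivization.submodule_eq]
    exact Submodule.mem_span_singleton_self _
  obtain ⟨h01, hd2⟩ := hP.2 P.rep hvP P.rep_nonzero
  obtain ⟨q, hq2, hq0, hexp⟩ := exists_tangentCone hF4 h01 hd2
  have hmain := encard_linesThrough_le h2 hFirr hF4 P.rep_nonzero (hP.1 _ hvP) hq2 hq0 hexp
  have hsub : {ℓ | ℓ ∈ LinesOn F ∧ P ∈ ℓ} ⊆
      (fun W : Submodule K (Fin 4 → K) => {p : Pt K | p.submodule ≤ W}) ''
        LinesThrough F P.rep := by
    rintro ℓ ⟨⟨⟨W, hW, rfl⟩, hℓ⟩, hPℓ⟩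
    refine ⟨W, ⟨hW, hPℓ hvP, fun w hw => ?_⟩, rfl⟩
    by_cases hw0 : w = 0
    · rw [hw0]
      simpa using eval_smul_of_isHomogeneous hF4 0 0
    · have hs : (Projectivization.mk K w hw0).submodule = Submodule.span K {w} :=
        Projectivization.submodule_mk w hw0
      refine hℓ (show (Projectivization.mk K w hw0).submodule ≤ W from ?_) w ?_
      · rwa [hs, Submodule.span_singleton_le_iff_mem]
      · rw [hs]; exact Submodule.mem_span_singleton_self w
  exact ((Set.encard_le_encard hsub).trans (Set.encard_image_le _ _)).trans hmain

end
end

section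
/- Let g = q·l ∈ K[x,y,z], where q is an irreducible homogeneous quadratic form and l is a nonzero linear form, so that the plane cubic curve {g = 0} ⊆ ℙ²(K) is the union of an irreducible conic and a line. Then the locus of inflection points of {g = 0} is exactly the line {l = 0}; that is, a point P ∈ ℙ²(K) satisfies g(P) = 0 and Hess(g)(P) = 0 if and only if l(P) = 0. -/
/-!
Write `q` and `l` in coordinates and let `B` be the (constant) Hessian matrix of `q` and `u` the
coefficient vector of `l`. The Hessian matrix of `q * l` is `l B + (B v) uᵀ + u (B v)ᵀ`, and the
matrix determinant lemma gives
`Hess (q * l) = 4 l³ det B - 2 q l (uᵀ adj(B) u)`.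
So `Hess (q * l)` vanishes where `l` does, while at a point with `q = 0` and `l ≠ 0` it equals
`4 l³ det B`. It remains to see that `det B ≠ 0` (`det_ne_zero_of_irreducible`): a kernel vector
of `B` makes `q` a form in two linear forms, and a binary quadratic form over an algebraically
closed field is a product of two linear forms, contradicting irreducibility of `q`.
-/

noncomputable section

open MvPolynomial

variable {K : Type*} [Field K]

/-- The ternary quadratic form
`a x₀² + b x₁² + c x₂² + d x₀x₁ + e x₀x₂ + f x₁x₂`. -/
def quadForm {K : Type*} [Field K] (a b c d e f : K) : MvPolynomial (Fin 3) K :=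
  C a * X 0 ^ 2 + C b * X 1 ^ 2 + C c * X 2 ^ 2 + C d * X 0 * X 1 + C e * X 0 * X 2
    + C f * X 1 * X 2

/-- The ternary linear form `r x₀ + s x₁ + t x₂`. -/
def linForm {K : Type*} [Field K] (r s t : K) : MvPolynomial (Fin 3) K :=
  C r * X 0 + C s * X 1 + C t * X 2

lemma monomial_eq_prod {K : Type*} [Field K] (d : Fin 3 →₀ ℕ) (k : K) :
    monomial d k = C k * (X 0 ^ d 0 * X 1 ^ d 1 * X 2 ^ d 2) := by
  rw [monomial_eq, Finsupp.prod_fintype _ _ (fun i => pow_zero _), Fin.prod_univ_three]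

lemma degree_fin_three (d : Fin 3 →₀ ℕ) : d.degree = d 0 + d 1 + d 2 := by
  rw [Finsupp.degree_eq_sum, Fin.sum_univ_three]

lemma exists_quadForm {K : Type*} [Field K] {q : MvPolynomial (Fin 3) K}
    (h : q.IsHomogeneous 2) : ∃ a b c d e f, q = quadForm a b c d e f := by
  rw [q.as_sum]
  refine Finset.sum_induction _ (fun p => ∃ a b c d e f, p = quadForm a b c d e f) ?_ ?_ ?_
  · rintro _ _ ⟨a, b, c, d, e, f, rfl⟩ ⟨a', b', c', d', e', f', rfl⟩
    refine ⟨a + a', b + b', c + c', d + d', e + e', f + f', ?_⟩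
    simp only [quadForm, C_add]
    ring
  · exact ⟨0, 0, 0, 0, 0, 0, by simp [quadForm]⟩
  · intro m hm
    have hdeg : m 0 + m 1 + m 2 = 2 := by
      rw [← degree_fin_three, Finsupp.degree_eq_weight_one]
      exact h (mem_support_iff.mp hm)
    rw [monomial_eq_prod]
    generalize coeff m q = k
    have h0 : m 0 ≤ 2 := by omega
    have h1 : m 1 ≤ 2 := by omega
    have h2 : m 2 = 2 - m 0 - m 1 := by omega
    rw [h2]
    interval_cases m 0 <;> interval_cases m 1 <;> try omega
    · exact ⟨0, 0, k, 0, 0, 0, by simp [quadForm]⟩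
    · exact ⟨0, 0, 0, 0, 0, k, by simp [quadForm, mul_assoc]⟩
    · exact ⟨0, k, 0, 0, 0, 0, by simp [quadForm]⟩
    · exact ⟨0, 0, 0, 0, k, 0, by simp [quadForm, mul_assoc]⟩
    · exact ⟨0, 0, 0, k, 0, 0, by simp [quadForm, mul_assoc]⟩
    · exact ⟨k, 0, 0, 0, 0, 0, by simp [quadForm]⟩

lemma exists_linForm {K : Type*} [Field K] {l : MvPolynomial (Fin 3) K}
    (h : l.IsHomogeneous 1) : ∃ r s t, l = linForm r s t := by
  rw [l.as_sum]
  refine Finset.sum_induction _ (fun p => ∃ r s t, p = linForm r s t) ?_ ?_ ?_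
  · rintro _ _ ⟨r, s, t, rfl⟩ ⟨r', s', t', rfl⟩
    refine ⟨r + r', s + s', t + t', ?_⟩
    simp only [linForm, C_add]
    ring
  · exact ⟨0, 0, 0, by simp [linForm]⟩
  · intro m hm
    have hdeg : m 0 + m 1 + m 2 = 1 := by
      rw [← degree_fin_three, Finsupp.degree_eq_weight_one]
      exact h (mem_support_iff.mp hm)
    rw [monomial_eq_prod]
    generalize coeff m l = k
    have h0 : m 0 ≤ 1 := by omega
    have h1 : m 1 ≤ 1 := by omega
    have h2 : m 2 = 1 - m 0 - m 1 := by omega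
    rw [h2]
    interval_cases m 0 <;> interval_cases m 1 <;> try omega
    · exact ⟨0, 0, k, by simp [linForm]⟩
    · exact ⟨0, k, 0, by simp [linForm]⟩
    · exact ⟨k, 0, 0, by simp [linForm]⟩

/-- Every binary quadratic form `a x² + d xy + b y²` factors as `(r x + s y) (t x + u y)`. -/
lemma exists_binary_factor {K : Type*} [Field K] [IsAlgClosed K] (a d b : K) :
    ∃ r s t u : K, a = r * t ∧ d = r * u + s * t ∧ b = s * u := by
  by_cases ha : a = 0
  · exact ⟨0, 1, d, b, by simp [ha], by simp, by simp⟩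
  · have hdeg : (Polynomial.C a * Polynomial.X ^ 2 + Polynomial.C d * Polynomial.X
        + Polynomial.C b).degree ≠ 0 := by
      rw [Polynomial.degree_quadratic ha]
      decide
    obtain ⟨x, hx⟩ := IsAlgClosed.exists_root _ hdeg
    simp only [Polynomial.IsRoot, Polynomial.eval_add, Polynomial.eval_mul, Polynomial.eval_C,
      Polynomial.eval_pow, Polynomial.eval_X] at hx
    refine ⟨a, -a * x, 1, x + d / a, by ring, by field_simp; ring, ?_⟩
    field_simp
    linear_combination hx

/-- Forms without constant term are not units, so a product of two linear forms is reducible. -/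
lemma not_irreducible_linForm_mul {K : Type*} [Field K] (r s t r' s' t' : K) :
    ¬ Irreducible (linForm r s t * linForm r' s' t') := by
  have key : ∀ r s t : K, ¬ IsUnit (linForm r s t) := by
    intro r s t h
    have := h.map (eval (0 : Fin 3 → K))
    simp [linForm] at this
  intro h
  rcases h.isUnit_or_isUnit rfl with h | h
  · exact key _ _ _ h
  · exact key _ _ _ h

/-- A quadratic form whose Hessian matrix has a nonzero kernel vector `(w₀, w₁, w₂)` splits into
two linear forms. -/
lemma not_irreducible_of_kernel {K : Type*} [Field K] [IsAlgClosed K] (h2 : (2 : K) ≠ 0)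
    (a b c d e f w0 w1 w2 : K) (hw : w0 ≠ 0 ∨ w1 ≠ 0 ∨ w2 ≠ 0)
    (e0 : 2 * a * w0 + d * w1 + e * w2 = 0) (e1 : d * w0 + 2 * b * w1 + f * w2 = 0)
    (e2 : e * w0 + f * w1 + 2 * c * w2 = 0) : ¬ Irreducible (quadForm a b c d e f) := by
  -- If `wᵢ ≠ 0`, then `q(x) = q(x - (xᵢ / wᵢ) w)` is a binary form in the two linear forms
  -- `xⱼ - (wⱼ / wᵢ) xᵢ`, `j ≠ i`.
  rcases hw with hw | hw | hw
  · obtain ⟨m, rfl⟩ : ∃ m, w1 = m * w0 := ⟨w1 / w0, by field_simp⟩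
    obtain ⟨n, rfl⟩ : ∃ n, w2 = n * w0 := ⟨w2 / w0, by field_simp⟩
    have hd : d = -2 * b * m - f * n := mul_right_cancel₀ hw (by linear_combination e1)
    have he : e = -f * m - 2 * c * n := mul_right_cancel₀ hw (by linear_combination e2)
    have ha : a = b * m ^ 2 + f * m * n + c * n ^ 2 :=
      mul_left_cancel₀ h2 (mul_right_cancel₀ hw
        (by subst hd he; linear_combination e0))
    obtain ⟨r, s, t, u, h⟩ := exists_binary_factor b f c
    convert not_irreducible_linForm_mul (-r * m - s * n) r s (-t * m - u * n) t u using 2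
    apply MvPolynomial.funext
    intro x
    simp only [quadForm, linForm, map_add, map_mul, map_pow, eval_C, eval_X]
    subst hd he ha
    rw [h.1, h.2.1, h.2.2]
    ring
  · obtain ⟨m, rfl⟩ : ∃ m, w0 = m * w1 := ⟨w0 / w1, by field_simp⟩
    obtain ⟨n, rfl⟩ : ∃ n, w2 = n * w1 := ⟨w2 / w1, by field_simp⟩
    have hd : d = -2 * a * m - e * n := mul_right_cancel₀ hw (by linear_combination e0)
    have hf : f = -e * m - 2 * c * n := mul_right_cancel₀ hw (by linear_combination e2)
    have hb : b = a * m ^ 2 + e * m * n + c * n ^ 2 :=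
      mul_left_cancel₀ h2 (mul_right_cancel₀ hw
        (by subst hd hf; linear_combination e1))
    obtain ⟨r, s, t, u, h⟩ := exists_binary_factor a e c
    convert not_irreducible_linForm_mul r (-r * m - s * n) s t (-t * m - u * n) u using 2
    apply MvPolynomial.funext
    intro x
    simp only [quadForm, linForm, map_add, map_mul, map_pow, eval_C, eval_X]
    subst hd hf hb
    rw [h.1, h.2.1, h.2.2]
    ring
  · obtain ⟨m, rfl⟩ : ∃ m, w0 = m * w2 := ⟨w0 / w2, by field_simp⟩
    obtain ⟨n, rfl⟩ : ∃ n, w1 = n * w2 := ⟨w1 / w2, by field_simp⟩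
    have he : e = -2 * a * m - d * n := mul_right_cancel₀ hw (by linear_combination e0)
    have hf : f = -d * m - 2 * b * n := mul_right_cancel₀ hw (by linear_combination e1)
    have hc : c = a * m ^ 2 + d * m * n + b * n ^ 2 :=
      mul_left_cancel₀ h2 (mul_right_cancel₀ hw
        (by subst he hf; linear_combination e2))
    obtain ⟨r, s, t, u, h⟩ := exists_binary_factor a d b
    convert not_irreducible_linForm_mul r s (-r * m - s * n) t u (-t * m - u * n) using 2
    apply MvPolynomial.funext
    intro x
    simp only [quadForm, linForm, map_add, map_mul, map_pow, eval_C, eval_X]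
    subst he hf hc
    rw [h.1, h.2.1, h.2.2]
    ring

lemma det_ne_zero_of_irreducible {K : Type*} [Field K] [IsAlgClosed K] (h2 : (2 : K) ≠ 0)
    {a b c d e f : K} (h : Irreducible (quadForm a b c d e f)) :
    (!![2 * a, d, e; d, 2 * b, f; e, f, 2 * c]).det ≠ 0 := by
  intro hdet
  obtain ⟨w, hw, hBw⟩ := Matrix.exists_mulVec_eq_zero_iff.mpr hdet
  have e0 := congrFun hBw 0
  have e1 := congrFun hBw 1
  have e2 := congrFun hBw 2
  simp [Matrix.mulVec, dotProduct, Fin.sum_univ_three] at e0 e1 e2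
  refine not_irreducible_of_kernel h2 a b c d e f (w 0) (w 1) (w 2) ?_ e0 e1 e2 h
  by_contra! hall
  exact hw (by ext i; fin_cases i <;> simp [hall])

lemma pderiv_quadForm {K : Type*} [Field K] (a b c d e f : K) (j : Fin 3) :
    pderiv j (quadForm a b c d e f) =
      linForm (!![2 * a, d, e; d, 2 * b, f; e, f, 2 * c] j 0)
        (!![2 * a, d, e; d, 2 * b, f; e, f, 2 * c] j 1)
        (!![2 * a, d, e; d, 2 * b, f; e, f, 2 * c] j 2) := by
  have hC : (C (2 : K) : MvPolynomial (Fin 3) K) = 2 := map_ofNat C 2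
  fin_cases j <;>
    simp [quadForm, linForm, Derivation.leibniz, Derivation.leibniz_pow, pderiv_X, hC] <;> ring

lemma pderiv_linForm {K : Type*} [Field K] (r s t : K) (j : Fin 3) :
    pderiv j (linForm r s t) = C (![r, s, t] j) := by
  fin_cases j <;> simp [linForm, Derivation.leibniz, pderiv_X]

/-- The formula `Hess (q * l) = 4 l³ det B - 2 q l (uᵀ adj(B) u)`, with `B` the Hessian matrix of
`q` and `u = (r, s, t)` the coefficient vector of `l`. -/
lemma eval_hessian {K : Type*} [Field K] (a b c d e f r s t : K) (v : Fin 3 → K) :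
    eval v (Matrix.det (Matrix.of fun i j : Fin 3 =>
      pderiv i (pderiv j (quadForm a b c d e f * linForm r s t)))) =
    4 * eval v (linForm r s t) ^ 3 * (!![2 * a, d, e; d, 2 * b, f; e, f, 2 * c]).det
      - 2 * eval v (quadForm a b c d e f) * eval v (linForm r s t) *
        (r ^ 2 * (4 * b * c - f ^ 2) + s ^ 2 * (4 * a * c - e ^ 2) + t ^ 2 * (4 * a * b - d ^ 2)
          + 2 * r * s * (e * f - 2 * c * d) + 2 * r * t * (d * f - 2 * b * e)
          + 2 * s * t * (d * e - 2 * a * f)) := by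
  rw [RingHom.map_det]
  simp only [Matrix.det_fin_three, RingHom.mapMatrix_apply, Matrix.map_apply, Matrix.of_apply,
    Derivation.leibniz, map_add, smul_eq_mul, pderiv_quadForm, pderiv_linForm, pderiv_C, map_mul,
    eval_C, mul_zero, zero_add]
  simp [quadForm, linForm]
  ring

/-- Let `g = q·l` be a plane cubic that is the union of an irreducible conic `{q = 0}`
and a line `{l = 0}` in ℙ²(K), char K = 3. Then the locus of inflection points of
`{g = 0}` (points of the curve where the Hessian determinant of `g` vanishes) is
exactly the line `{l = 0}`. -/
theorem statement4 (K : Type*) [Field K] [IsAlgClosed K] [CharP K 3]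
    (q l : MvPolynomial (Fin 3) K)
    (hqirr : Irreducible q) (hq2 : q.IsHomogeneous 2)
    (hl0 : l ≠ 0) (hl1 : l.IsHomogeneous 1) :
    ∀ v : Fin 3 → K, v ≠ 0 →
      ((eval v (q * l) = 0 ∧
          eval v (Matrix.det (Matrix.of
            fun i j : Fin 3 => pderiv i (pderiv j (q * l)))) = 0)
        ↔ eval v l = 0) := by
  have h2 : (2 : K) ≠ 0 := by
    intro h
    have h3 : (3 : K) = 0 := by exact_mod_cast CharP.cast_eq_zero K 3
    exact one_ne_zero (by linear_combination h3 - h : (1 : K) = 0)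
  obtain ⟨a, b, c, d, e, f, rfl⟩ := exists_quadForm hq2
  obtain ⟨r, s, t, rfl⟩ := exists_linForm hl1
  have hdet := det_ne_zero_of_irreducible h2 hqirr
  intro v _
  rw [eval_hessian, map_mul]
  constructor
  · rintro ⟨hg, hH⟩
    by_contra hl
    have hq := (mul_eq_zero.mp hg).resolve_right hl
    have h4 : (4 : K) ≠ 0 := by
      have := mul_ne_zero h2 h2
      norm_num at this
      exact this
    rw [hq, mul_zero, zero_mul, zero_mul, sub_zero] at hH
    exact mul_ne_zero (mul_ne_zero h4 (pow_ne_zero 3 hl)) hdet hH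
  · intro hl
    simp [hl]


end
end

section
/- Let X = {F = 0} be a quartic surface containing a cuspidal line ℓ. Then there exist a projective linear transformation φ ∈ PGL₄(K), homogeneous forms q₃, q₃′ of degree 3 and q₄ of degree 4 in K[x₀,x₁], and a nonzero scalar λ ∈ K, such that φ maps ℓ onto the line {x₀ = x₁ = 0} and transforms F into λ·(x₀x₃³ − x₁x₂³ + x₂·q₃(x₀,x₁) + x₃·q₃′(x₀,x₁) + q₄(x₀,x₁)). -/
/-!
Put the line at `x₀ = x₁ = 0` and write `F = x₀ A + x₁ B` with cubic forms `A, B`. The residual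
cubic in the plane `λ x₀ = μ x₁` is `μ A + λ B`, and the gradient of `F` along the line is
`(A, B, 0, 0)`, so smoothness says that `A` and `B` have no common zero on the line. Inseparability
says that the residual cubics restrict on the line to binary cubics with a single zero; for
`A` and `B`, since the characteristic is 3, this makes the restrictions `(α₂x₂ + α₃x₃)³` and
`(β₂x₂ + β₃x₃)³` (`middle_zero`). These two linear forms are independent by smoothness, so a change
of `x₂, x₃` gives `A = x₃³`, `B = -x₂³` on the line (`CuspVec.exists_second_change`).

What remains is to eliminate the part `x₀² p + x₀x₁ q + x₁² r` of `F` with `p, q, r` quadratic in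
`x₂, x₃`. In the plane `x₀ = m³ x₁` the residual cubic meets the line at `(0 : 0 : m : 1)`, and
being singular there means `m⁶ p(m, 1) + m³ q(m, 1) + r(m, 1) = 0`. This holds for all `m`, and the
nine coefficients of `p, q, r` occur in nine different degrees, so they all vanish
(`CuspVec.normal_form`).

The projective hypotheses enter only through `cuspVec_of_cuspidal`, which translates them into
conditions on vectors in arbitrary coordinates adapted to the line.
-/


noncomputable section

open MvPolynomial

variable {K : Type*} [Field K]

/-! ### Linear substitutions and directional derivatives -/

/-- The derivative of `P` at the point `v` in the direction `w`. -/
def dirDeriv (P : MvPolynomial (Fin 4) K) (v w : Fin 4 → K) : K :=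
  ∑ i : Fin 4, w i * eval v (pderiv i P)

lemma dirDeriv_add (P Q : MvPolynomial (Fin 4) K) (v w : Fin 4 → K) :
    dirDeriv (P + Q) v w = dirDeriv P v w + dirDeriv Q v w := by
  simp [dirDeriv, mul_add, Finset.sum_add_distrib]

lemma dirDeriv_mul (P Q : MvPolynomial (Fin 4) K) (v w : Fin 4 → K) :
    dirDeriv (P * Q) v w = dirDeriv P v w * eval v Q + eval v P * dirDeriv Q v w := by
  simp only [dirDeriv, Derivation.leibniz, smul_eq_mul, map_add, map_mul, Finset.sum_mul,
    Finset.mul_sum, ← Finset.sum_add_distrib]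
  exact Finset.sum_congr rfl fun i _ => by ring

lemma dirDeriv_C (c : K) (v w : Fin 4 → K) : dirDeriv (C c) v w = 0 := by
  simp [dirDeriv]

lemma dirDeriv_X (i : Fin 4) (v w : Fin 4 → K) : dirDeriv (X i) v w = w i := by
  simp [dirDeriv, pderiv_X, Pi.single_apply, apply_ite (eval v)]

/-- The linear form substituted for `X i` in `linSubst g` evaluates to the `i`-th coordinate
of `g v`. -/
lemma sum_apply_single (g : (Fin 4 → K) ≃ₗ[K] (Fin 4 → K)) (v : Fin 4 → K) (i : Fin 4) :
    ∑ j : Fin 4, g (Pi.single j 1) i * v j = g v i := by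
  have hv : v = ∑ j, v j • (Pi.single j 1 : Fin 4 → K) := by
    ext k; simp [Finset.sum_apply, Pi.single_apply]
  conv_rhs => rw [hv]
  simp only [map_sum, map_smul, Finset.sum_apply, Pi.smul_apply, smul_eq_mul, mul_comm]

lemma eval_linSubst (g : (Fin 4 → K) ≃ₗ[K] (Fin 4 → K)) (P : MvPolynomial (Fin 4) K)
    (v : Fin 4 → K) : eval v (linSubst g P) = eval (g v) P := by
  induction P using MvPolynomial.induction_on with
  | C a => simp [linSubst]
  | add p q hp hq => simp only [linSubst, map_add] at *; rw [hp, hq]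
  | mul_X p i hp =>
    simp only [linSubst, map_mul, aeval_X] at *
    rw [hp]; simp [sum_apply_single]

lemma dirDeriv_linSubst (g : (Fin 4 → K) ≃ₗ[K] (Fin 4 → K)) (P : MvPolynomial (Fin 4) K)
    (v w : Fin 4 → K) : dirDeriv (linSubst g P) v w = dirDeriv P (g v) (g w) := by
  induction P using MvPolynomial.induction_on with
  | C a => simp [linSubst, dirDeriv]
  | add p q hp hq =>
    have : linSubst g (p + q) = linSubst g p + linSubst g q := by simp [linSubst]
    rw [this, dirDeriv_add, dirDeriv_add, hp, hq]
  | mul_X p i hp =>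
    have : linSubst g (p * X i) = linSubst g p * linSubst g (X i) := by simp [linSubst]
    rw [this, dirDeriv_mul, dirDeriv_mul, hp, eval_linSubst, eval_linSubst, dirDeriv_X]
    congr 2
    rw [← sum_apply_single g w i]
    simp only [linSubst, aeval_X, Fin.sum_univ_four, dirDeriv_add, dirDeriv_mul, dirDeriv_X,
      dirDeriv_C]
    simp

lemma linSubst_hom (g : (Fin 4 → K) ≃ₗ[K] (Fin 4 → K)) {P : MvPolynomial (Fin 4) K} {n : ℕ}
    (hP : P.IsHomogeneous n) : (linSubst g P).IsHomogeneous n := by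
  have := hP.aeval (fun i => ∑ j : Fin 4, C (g (Pi.single j 1) i) * X j) (n := 1) (fun i =>
    IsHomogeneous.sum _ _ _ fun j _ => (isHomogeneous_X K j).C_mul _)
  simpa [linSubst] using this

/-- Polynomials over an infinite field are determined by their values, so identities between
substitutions can be checked pointwise. -/
lemma linSubst_symm [Infinite K] (g : (Fin 4 → K) ≃ₗ[K] (Fin 4 → K)) (P : MvPolynomial (Fin 4) K) :
    linSubst g (linSubst g.symm P) = P := by
  apply MvPolynomial.funext; intro v; simp [eval_linSubst]

lemma linSubst_trans [Infinite K] (g g' : (Fin 4 → K) ≃ₗ[K] (Fin 4 → K))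
    (P : MvPolynomial (Fin 4) K) :
    linSubst (g.trans g').symm P = linSubst g'.symm (linSubst g.symm P) := by
  apply MvPolynomial.funext; intro v; simp [eval_linSubst]

/-! ### Homogeneous forms at projective points -/

/-- A form of positive degree lies in the ideal generated by the variables, with homogeneous
cofactors. -/
lemma exists_split {P : MvPolynomial (Fin 4) K} {n : ℕ} (hP : P.IsHomogeneous (n + 1)) :
    ∃ A : Fin 4 → MvPolynomial (Fin 4) K, (∀ i, (A i).IsHomogeneous n) ∧
      P = X 0 * A 0 + X 1 * A 1 + X 2 * A 2 + X 3 * A 3 := by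
  rw [P.as_sum]
  refine Finset.sum_induction _ (fun P => ∃ A : Fin 4 → MvPolynomial (Fin 4) K,
    (∀ i, (A i).IsHomogeneous n) ∧ P = X 0 * A 0 + X 1 * A 1 + X 2 * A 2 + X 3 * A 3) ?_ ?_ ?_
  · rintro P Q ⟨A, hA, rfl⟩ ⟨B, hB, rfl⟩
    exact ⟨A + B, fun i => (hA i).add (hB i), by simp only [Pi.add_apply]; ring⟩
  · exact ⟨0, fun i => isHomogeneous_zero _ _ _, by simp⟩
  · intro d hd
    have hdeg : Finsupp.degree d = n + 1 := by
      rw [Finsupp.degree_eq_weight_one]; exact hP (mem_support_iff.1 hd)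
    have hd0 : d ≠ 0 := by rintro rfl; simp at hdeg
    obtain ⟨i, hi⟩ := Finsupp.ne_iff.1 hd0
    have hi' : Finsupp.single i 1 ≤ d := by
      simpa [Finsupp.single_le_iff, Nat.one_le_iff_ne_zero] using hi
    obtain ⟨e, rfl⟩ := le_iff_exists_add.1 hi'
    refine ⟨Pi.single i (monomial e (coeff (Finsupp.single i 1 + e) P)), fun j => ?_, ?_⟩
    · by_cases hj : j = i
      · subst hj
        rw [Pi.single_eq_same]
        apply isHomogeneous_monomial
        rw [map_add, Finsupp.degree_single] at hdeg
        omega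
      · rw [Pi.single_eq_of_ne hj]; exact isHomogeneous_zero _ _ _
    · have : ∀ A : Fin 4 → MvPolynomial (Fin 4) K,
          X 0 * A 0 + X 1 * A 1 + X 2 * A 2 + X 3 * A 3 = ∑ j, X j * A j := by
        intro A; rw [Fin.sum_univ_four]
      rw [this, Finset.sum_eq_single i]
      · rw [Pi.single_eq_same, X, monomial_mul, one_mul]
      · intro j _ hj; simp [Pi.single_eq_of_ne hj]
      · simp

lemma eq_C_of_hom_zero {P : MvPolynomial (Fin 4) K} (hP : P.IsHomogeneous 0) :
    ∃ c, P = C c :=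
  ⟨_, totalDegree_eq_zero_iff_eq_C.1 (Nat.le_zero.1 hP.totalDegree_le)⟩

lemma eval_smul_of_hom {n : ℕ} : ∀ {P : MvPolynomial (Fin 4) K}, P.IsHomogeneous n →
    ∀ (a : K) (v : Fin 4 → K), eval (a • v) P = a ^ n * eval v P := by
  induction n with
  | zero => intro P hP a v; obtain ⟨c, rfl⟩ := eq_C_of_hom_zero hP; simp
  | succ n ih =>
    intro P hP a v
    obtain ⟨A, hA, rfl⟩ := exists_split hP
    simp only [map_add, map_mul, eval_X, ih (hA _), Pi.smul_apply, smul_eq_mul]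
    ring

lemma PZero_mk {P : MvPolynomial (Fin 4) K} {n : ℕ} (hP : P.IsHomogeneous n) (v : Fin 4 → K)
    (hv : v ≠ 0) : PZero P (Projectivization.mk K v hv) ↔ eval v P = 0 := by
  constructor
  · intro h; exact h v (by simp [Projectivization.submodule_mk])
  · intro h u hu
    rw [Projectivization.submodule_mk, Submodule.mem_span_singleton] at hu
    obtain ⟨a, rfl⟩ := hu
    rw [eval_smul_of_hom hP, h, mul_zero]

/-! ### Cuspidal lines in coordinates -/

/-- The conditions for `x₀ = x₁ = 0` to be a cuspidal line of `{F = 0}`, expressed with vectors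
instead of projective points: `F` vanishes on the line and is smooth along it, and each residual
cubic `G` has a unique zero on the line up to scaling, at which all derivatives of `G` in
directions of the plane `h = 0` vanish. -/
structure CuspVec (F : MvPolynomial (Fin 4) K) : Prop where
  smooth : ∀ v : Fin 4 → K, v 0 = 0 → v 1 = 0 → v ≠ 0 → ∃ w, dirDeriv F v w ≠ 0
  vanish : ∀ v : Fin 4 → K, v 0 = 0 → v 1 = 0 → eval v F = 0
  res : ∀ h h' G Q : MvPolynomial (Fin 4) K, h.IsHomogeneous 1 → h'.IsHomogeneous 1 →
    G.IsHomogeneous 3 → Q.IsHomogeneous 3 →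
    (∀ v : Fin 4 → K, (v 0 = 0 ∧ v 1 = 0) ↔ (eval v h = 0 ∧ eval v h' = 0)) →
    (∃ v, eval v h = 0 ∧ eval v F ≠ 0) → F = h' * G + h * Q →
    (∃ v : Fin 4 → K, v ≠ 0 ∧ v 0 = 0 ∧ v 1 = 0 ∧ eval v G = 0 ∧
      ∀ u : Fin 4 → K, u ≠ 0 → u 0 = 0 → u 1 = 0 → eval u G = 0 → ∃ c : K, c • u = v) ∧
    ∀ v : Fin 4 → K, v ≠ 0 → v 0 = 0 → v 1 = 0 → eval v G = 0 →
      ∀ w, eval w h = 0 → dirDeriv G v w = 0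

lemma mk_le_iff (W : Submodule K (Fin 4 → K)) (v : Fin 4 → K) (hv : v ≠ 0) :
    (Projectivization.mk K v hv).submodule ≤ W ↔ v ∈ W := by
  rw [Projectivization.submodule_mk, Submodule.span_singleton_le_iff_mem]

/-- In any coordinates `g` straightening a cuspidal line to `x₀ = x₁ = 0`, the transformed form
is cuspidal in the sense of `CuspVec`: decompositions `F = h'G + hQ` and directional derivatives
are pulled back along `g`. -/
lemma cuspVec_of_cuspidal [Infinite K] {F : MvPolynomial (Fin 4) K} (hF : F.IsHomogeneous 4)
    (W : Submodule K (Fin 4 → K)) (hW : {p : Pt K | p.submodule ≤ W} ⊆ SurfOf F)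
    (hc : CuspidalLine F {p : Pt K | p.submodule ≤ W})
    (g : (Fin 4 → K) ≃ₗ[K] (Fin 4 → K)) (hg : ∀ v, v ∈ W ↔ g v 0 = 0 ∧ g v 1 = 0) :
    CuspVec (linSubst g.symm F) := by
  have mem : ∀ v : Fin 4 → K, v 0 = 0 → v 1 = 0 → g.symm v ∈ W := by
    intro v h0 h1; rw [hg]; simp [h0, h1]
  have ne : ∀ v : Fin 4 → K, v ≠ 0 → g.symm v ≠ 0 := by
    intro v hv; simpa using hv
  have hvan : ∀ v : Fin 4 → K, v 0 = 0 → v 1 = 0 → eval v (linSubst g.symm F) = 0 := by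
    intro v h0 h1
    rw [eval_linSubst]
    by_cases hv : v = 0
    · subst hv; rw [map_zero]
      have := eval_smul_of_hom hF 0 0
      simpa using this
    · rw [← PZero_mk hF _ (ne v hv)]
      exact hW ((mk_le_iff W _ _).2 (mem v h0 h1))
  refine ⟨?_, hvan, ?_⟩
  · intro v h0 h1 hv
    by_contra hcon
    push Not at hcon
    refine hc.1.1 (Projectivization.mk K _ (ne v hv)) ((mk_le_iff W _ _).2 (mem v h0 h1))
      ⟨hW ((mk_le_iff W _ _).2 (mem v h0 h1)), ?_⟩
    intro i
    change PZero _ _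
    rw [PZero_mk (hF.pderiv (i := i))]
    have := hcon (g (Pi.single i 1))
    rw [dirDeriv_linSubst, g.symm_apply_apply] at this
    simpa [dirDeriv, Pi.single_apply] using this
  · intro h h' G Q hh hh' hG hQ hline hpl hdec
    have hres : ResDecomp F {p : Pt K | p.submodule ≤ W} (linSubst g h) (linSubst g h')
        (linSubst g G) (linSubst g Q) := by
      refine ⟨linSubst_hom g hh, linSubst_hom g hh', linSubst_hom g hG, linSubst_hom g hQ,
        ?_, ?_, ?_⟩
      · ext p
        induction p using Projectivization.ind with
        | h v hv =>
        simp only [Set.mem_ofPred_eq]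
        rw [mk_le_iff, PZero_mk (linSubst_hom g hh), PZero_mk (linSubst_hom g hh'), hg, hline,
          eval_linSubst, eval_linSubst]
      · obtain ⟨v, hv, hv'⟩ := hpl
        intro hsub
        have hv0 : v ≠ 0 := by
          rintro rfl; exact hv' (hvan 0 rfl rfl)
        have := @hsub (Projectivization.mk K _ (ne v hv0)) (by
          simp only [Set.mem_ofPred_eq]
          rw [PZero_mk (linSubst_hom g hh), eval_linSubst, g.apply_symm_apply, hv])
        change PZero _ _ at this
        rw [PZero_mk hF] at this
        exact hv' (by rw [eval_linSubst, this])
      · rw [← linSubst_symm g F, hdec]; simp [linSubst]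
    constructor
    · obtain ⟨p, ⟨hp, hpG⟩, huniq⟩ := hc.1.2 _ _ _ _ hres
      induction p using Projectivization.ind with
      | h v hv =>
      simp only [Set.mem_ofPred_eq] at hp
      rw [mk_le_iff, hg] at hp
      rw [PZero_mk (linSubst_hom g hG), eval_linSubst] at hpG
      refine ⟨g v, by simpa using hv, hp.1, hp.2, hpG, ?_⟩
      intro u hu h0 h1 huG
      have := huniq (Projectivization.mk K _ (ne u hu)) ⟨(mk_le_iff W _ _).2 (mem u h0 h1), by
        rw [PZero_mk (linSubst_hom g hG), eval_linSubst, g.apply_symm_apply, huG]⟩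
      rw [Eq.comm, Projectivization.mk_eq_mk_iff'] at this
      obtain ⟨c, hcc⟩ := this
      exact ⟨c, by rw [← hcc, map_smul, g.apply_symm_apply]⟩
    · intro v hv h0 h1 hvG w hw
      have := (hc.2 _ _ _ _ hres (Projectivization.mk K _ (ne v hv))
        ((mk_le_iff W _ _).2 (mem v h0 h1)) (by
          rw [PZero_mk (linSubst_hom g hG), eval_linSubst, g.apply_symm_apply, hvG])).2.2
          (g.symm v) (by simp [Projectivization.submodule_mk]) (g.symm w) (by
            rw [eval_linSubst, g.apply_symm_apply, hw])
      change dirDeriv _ _ _ = 0 at this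
      rwa [dirDeriv_linSubst, g.apply_symm_apply, g.apply_symm_apply] at this

/-- Coordinates in which a given two-dimensional subspace becomes `x₀ = x₁ = 0`. -/
lemma exists_straighten (W : Submodule K (Fin 4 → K)) (hW : Module.finrank K W = 2) :
    ∃ g : (Fin 4 → K) ≃ₗ[K] (Fin 4 → K), ∀ v, v ∈ W ↔ g v 0 = 0 ∧ g v 1 = 0 := by
  obtain ⟨C, hC⟩ := W.exists_isCompl
  have hC2 : Module.finrank K C = 2 := by
    have := Submodule.finrank_add_eq_of_isCompl hC
    rw [hW, Module.finrank_fin_fun] at this; omega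
  let eW : W ≃ₗ[K] (Fin 2 → K) := LinearEquiv.ofFinrankEq _ _ (by simp [hW])
  let eC : C ≃ₗ[K] (Fin 2 → K) := LinearEquiv.ofFinrankEq _ _ (by simp [hC2])
  let e : ((Fin 2 → K) × (Fin 2 → K)) ≃ₗ[K] (Fin 4 → K) :=
    { toFun := fun p => ![p.1 0, p.1 1, p.2 0, p.2 1]
      invFun := fun v => (![v 0, v 1], ![v 2, v 3])
      map_add' := fun p q => by ext i; fin_cases i <;> rfl
      map_smul' := fun c q => by ext i; fin_cases i <;> rfl
      left_inv := fun p => by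
        ext i <;> fin_cases i <;> rfl
      right_inv := fun p => by ext i; fin_cases i <;> rfl }
  refine ⟨(C.prodEquivOfIsCompl W hC.symm).symm ≪≫ₗ (eC.prodCongr eW) ≪≫ₗ e, fun v => ?_⟩
  rw [← Submodule.prodEquivOfIsCompl_symm_apply_fst_eq_zero C W hC.symm, ← eC.map_eq_zero_iff]
  simp [e, funext_iff, Fin.forall_fin_two]

lemma projMap_image (W : Submodule K (Fin 4 → K)) (g : (Fin 4 → K) ≃ₗ[K] (Fin 4 → K))
    (hg : ∀ v, v ∈ W ↔ g v 0 = 0 ∧ g v 1 = 0) :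
    projMap g '' {p : Pt K | p.submodule ≤ W} = {p : Pt K | PZero (X 0) p ∧ PZero (X 1) p} := by
  ext p
  constructor
  · rintro ⟨q, hq, rfl⟩
    induction q using Projectivization.ind with
    | h v hv =>
    simp only [Set.mem_ofPred_eq, mk_le_iff] at hq ⊢
    have h' : projMap g (Projectivization.mk K v hv) =
      Projectivization.mk K (g v) (by simpa using hv) := rfl
    rw [h', PZero_mk (isHomogeneous_X K _), PZero_mk (isHomogeneous_X K _), eval_X, eval_X, ← hg]
    exact hq
  · intro hp
    induction p using Projectivization.ind with
    | h v hv =>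
    simp only [Set.mem_ofPred_eq] at hp
    rw [PZero_mk (isHomogeneous_X K _), PZero_mk (isHomogeneous_X K _), eval_X, eval_X] at hp
    refine ⟨Projectivization.mk K (g.symm v) (by simpa using hv), ?_, ?_⟩
    · rw [Set.mem_ofPred_eq, mk_le_iff, hg]; simpa using hp
    · simp [projMap, Projectivization.map_mk]

/-! ### Expansion of forms along the line `x₀ = x₁ = 0` -/

lemma hom_add_X_mul {A B : MvPolynomial (Fin 4) K} {n : ℕ} (hA : A.IsHomogeneous (n + 1))
    (hB : B.IsHomogeneous n) (i : Fin 4) : (A + X i * B).IsHomogeneous (n + 1) := by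
  refine hA.add ?_
  rw [add_comm]
  exact (isHomogeneous_X K i).mul hB

lemma hom_one {P : MvPolynomial (Fin 4) K} (hP : P.IsHomogeneous 1) :
    ∃ a b c d : K, P = C a * X 0 + C b * X 1 + C c * X 2 + C d * X 3 := by
  obtain ⟨A, hA, rfl⟩ := exists_split hP
  obtain ⟨a, ha⟩ := eq_C_of_hom_zero (hA 0)
  obtain ⟨b, hb⟩ := eq_C_of_hom_zero (hA 1)
  obtain ⟨c, hc⟩ := eq_C_of_hom_zero (hA 2)
  obtain ⟨d, hd⟩ := eq_C_of_hom_zero (hA 3)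
  exact ⟨a, b, c, d, by rw [ha, hb, hc, hd]; ring⟩

/-- A form of degree 2 modulo `(x₀, x₁)` is a binary form in `x₂, x₃`; likewise in degrees 3
and 4 below. -/
lemma hom_two {P : MvPolynomial (Fin 4) K} (hP : P.IsHomogeneous 2) :
    ∃ (A B : MvPolynomial (Fin 4) K) (c0 c1 c2 : K), A.IsHomogeneous 1 ∧ B.IsHomogeneous 1 ∧
      P = X 0 * A + X 1 * B + C c0 * X 3 ^ 2 + C c1 * X 2 * X 3 + C c2 * X 2 ^ 2 := by
  obtain ⟨A, hA, rfl⟩ := exists_split hP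
  obtain ⟨a, b, c, d, h2⟩ := hom_one (hA 2)
  obtain ⟨a', b', c', d', h3⟩ := hom_one (hA 3)
  refine ⟨A 0 + X 2 * C a + X 3 * C a', A 1 + X 2 * C b + X 3 * C b', d', d + c', c,
    hom_add_X_mul (hom_add_X_mul (hA 0) (isHomogeneous_C _ _) 2) (isHomogeneous_C _ _) 3,
    hom_add_X_mul (hom_add_X_mul (hA 1) (isHomogeneous_C _ _) 2) (isHomogeneous_C _ _) 3, ?_⟩
  rw [h2, h3]; simp only [map_add]; ring

lemma hom_three {P : MvPolynomial (Fin 4) K} (hP : P.IsHomogeneous 3) :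
    ∃ (A B : MvPolynomial (Fin 4) K) (c0 c1 c2 c3 : K), A.IsHomogeneous 2 ∧ B.IsHomogeneous 2 ∧
      P = X 0 * A + X 1 * B + C c0 * X 3 ^ 3 + C c1 * X 2 * X 3 ^ 2 + C c2 * X 2 ^ 2 * X 3
        + C c3 * X 2 ^ 3 := by
  obtain ⟨A, hA, rfl⟩ := exists_split hP
  obtain ⟨P, Q, c0, c1, c2, hP, hQ, h2⟩ := hom_two (hA 2)
  obtain ⟨P', Q', d0, d1, d2, hP', hQ', h3⟩ := hom_two (hA 3)
  refine ⟨A 0 + X 2 * P + X 3 * P', A 1 + X 2 * Q + X 3 * Q', d0, c0 + d1, c1 + d2, c2,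
    hom_add_X_mul (hom_add_X_mul (hA 0) hP 2) hP' 3,
    hom_add_X_mul (hom_add_X_mul (hA 1) hQ 2) hQ' 3, ?_⟩
  rw [h2, h3]; simp only [map_add]; ring

lemma hom_four {P : MvPolynomial (Fin 4) K} (hP : P.IsHomogeneous 4) :
    ∃ (A B : MvPolynomial (Fin 4) K) (c0 c1 c2 c3 c4 : K),
      A.IsHomogeneous 3 ∧ B.IsHomogeneous 3 ∧
      P = X 0 * A + X 1 * B + C c0 * X 3 ^ 4 + C c1 * X 2 * X 3 ^ 3 + C c2 * X 2 ^ 2 * X 3 ^ 2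
        + C c3 * X 2 ^ 3 * X 3 + C c4 * X 2 ^ 4 := by
  obtain ⟨A, hA, rfl⟩ := exists_split hP
  obtain ⟨P, Q, c0, c1, c2, c3, hP, hQ, h2⟩ := hom_three (hA 2)
  obtain ⟨P', Q', d0, d1, d2, d3, hP', hQ', h3⟩ := hom_three (hA 3)
  refine ⟨A 0 + X 2 * P + X 3 * P', A 1 + X 2 * Q + X 3 * Q', d0, c0 + d1, c1 + d2, c2 + d3, c3,
    hom_add_X_mul (hom_add_X_mul (hA 0) hP 2) hP' 3,
    hom_add_X_mul (hom_add_X_mul (hA 1) hQ 2) hQ' 3, ?_⟩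
  rw [h2, h3]; simp only [map_add]; ring

/-! ### Zeros of polynomials in one variable and of binary cubics -/

/-- A polynomial function of degree at most 8 that vanishes identically has zero coefficients. -/
lemma coeffs_zero [Infinite K] {c0 c1 c2 c3 c4 c5 c6 c7 c8 : K}
    (h : ∀ t : K, c0 + c1 * t + c2 * t ^ 2 + c3 * t ^ 3 + c4 * t ^ 4 + c5 * t ^ 5 + c6 * t ^ 6
      + c7 * t ^ 7 + c8 * t ^ 8 = 0) :
    (c0 = 0 ∧ c1 = 0 ∧ c2 = 0) ∧ (c3 = 0 ∧ c4 = 0 ∧ c5 = 0) ∧ (c6 = 0 ∧ c7 = 0 ∧ c8 = 0) := by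
  have hp : (Polynomial.C c0 + Polynomial.C c1 * Polynomial.X + Polynomial.C c2 * Polynomial.X ^ 2
    + Polynomial.C c3 * Polynomial.X ^ 3 + Polynomial.C c4 * Polynomial.X ^ 4
    + Polynomial.C c5 * Polynomial.X ^ 5 + Polynomial.C c6 * Polynomial.X ^ 6
    + Polynomial.C c7 * Polynomial.X ^ 7 + Polynomial.C c8 * Polynomial.X ^ 8 : Polynomial K)
      = 0 := by
    apply Polynomial.funext; intro t; simpa using h t
  have hc := fun n => congrArg (fun p => Polynomial.coeff p n) hp
  refine ⟨⟨?_, ?_, ?_⟩, ⟨?_, ?_, ?_⟩, ⟨?_, ?_, ?_⟩⟩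
  · simpa [Polynomial.coeff_X, Polynomial.coeff_C] using hc 0
  · simpa [Polynomial.coeff_X, Polynomial.coeff_C] using hc 1
  · simpa [Polynomial.coeff_X, Polynomial.coeff_C] using hc 2
  · simpa [Polynomial.coeff_X, Polynomial.coeff_C] using hc 3
  · simpa [Polynomial.coeff_X, Polynomial.coeff_C] using hc 4
  · simpa [Polynomial.coeff_X, Polynomial.coeff_C] using hc 5
  · simpa [Polynomial.coeff_X, Polynomial.coeff_C] using hc 6
  · simpa [Polynomial.coeff_X, Polynomial.coeff_C] using hc 7
  · simpa [Polynomial.coeff_X, Polynomial.coeff_C] using hc 8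

/-- A polynomial vanishing at all points `v + u w` with `u ≠ 0` also vanishes at `v`. -/
lemma eval_zero_of_punctured [Infinite K] (P : MvPolynomial (Fin 4) K) (v w : Fin 4 → K)
    (h : ∀ u : K, u ≠ 0 → eval (v + u • w) P = 0) : eval v P = 0 := by
  let p : Polynomial K :=
    aeval (fun i => Polynomial.C (v i) + Polynomial.X * Polynomial.C (w i)) P
  have hp : ∀ u, p.eval u = eval (v + u • w) P := by
    intro u
    have : (Polynomial.aeval u).comp
        (aeval (fun i => Polynomial.C (v i) + Polynomial.X * Polynomial.C (w i)))
        = aeval (R := K) (v + u • w) := by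
      apply MvPolynomial.algHom_ext; intro i; simp; ring
    have h2 := congrArg (fun f => f P) this
    simpa [p, ← Polynomial.coe_aeval_eq_eval, MvPolynomial.coe_aeval_eq_eval] using h2
  have : Polynomial.X * p = 0 := by
    apply Polynomial.funext; intro u
    by_cases hu : u = 0
    · simp [hu]
    · simp [hp, h u hu]
  have hp0 : p = 0 := (mul_eq_zero.1 this).resolve_left Polynomial.X_ne_zero
  have := hp 0
  simpa [hp0] using this.symm

lemma cubic_root [IsAlgClosed K] (c0 c1 c2 c3 : K) (h : c1 ≠ 0 ∨ c2 ≠ 0 ∨ c3 ≠ 0) :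
    ∃ t : K, c0 + c1 * t + c2 * t ^ 2 + c3 * t ^ 3 = 0 := by
  let p : Polynomial K := Polynomial.C c0 + Polynomial.C c1 * Polynomial.X
    + Polynomial.C c2 * Polynomial.X ^ 2 + Polynomial.C c3 * Polynomial.X ^ 3
  have hp : p.degree ≠ 0 := by
    intro hd
    have hc := Polynomial.eq_C_of_degree_eq_zero hd
    have hc' := fun n => congrArg (fun p => Polynomial.coeff p n) hc
    have h1 := hc' 1
    have h2 := hc' 2
    have h3 := hc' 3
    simp [p, Polynomial.coeff_X, Polynomial.coeff_C] at h1 h2 h3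
    tauto
  obtain ⟨t, ht⟩ := IsAlgClosed.exists_root p hp
  exact ⟨t, by simpa [p] using ht⟩

/-- Every cubic form has a zero on the line `x₀ = x₁ = 0`. -/
lemma cubic_zero [IsAlgClosed K] {P : MvPolynomial (Fin 4) K} (hP : P.IsHomogeneous 3) :
    ∃ v : Fin 4 → K, v ≠ 0 ∧ v 0 = 0 ∧ v 1 = 0 ∧ eval v P = 0 := by
  obtain ⟨A, B, c0, c1, c2, c3, -, -, rfl⟩ := hom_three hP
  by_cases h : c3 = 0
  · exact ⟨![0, 0, 1, 0], fun h => by simpa using congrFun h 2, rfl, rfl, by simp [h]⟩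
  · obtain ⟨t, ht⟩ := cubic_root c0 c1 c2 c3 (Or.inr (Or.inr h))
    exact ⟨![0, 0, t, 1], fun h => by simpa using congrFun h 3, rfl, rfl, by simpa using ht⟩

/-- A binary cubic form with a single zero in `ℙ¹` is a multiple of the cube of a linear form, so
in characteristic 3 its two mixed coefficients vanish. The points of `ℙ¹` are represented by
vectors of `K⁴` whose first two coordinates are zero. -/
lemma middle_zero [IsAlgClosed K] [CharP K 3] (c0 c1 c2 c3 : K)
    (v : Fin 4 → K)
    (hu : ∀ u : Fin 4 → K, u ≠ 0 → u 0 = 0 → u 1 = 0 →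
      c0 * u 3 ^ 3 + c1 * u 2 * u 3 ^ 2 + c2 * u 2 ^ 2 * u 3 + c3 * u 2 ^ 3 = 0 →
      ∃ c : K, c • u = v) (hv : v ≠ 0) : c1 = 0 ∧ c2 = 0 := by
  have h3 : (3 : K) = 0 := by exact_mod_cast CharP.cast_eq_zero K 3
  have hroot : ∀ t : K, c0 + c1 * t + c2 * t ^ 2 + c3 * t ^ 3 = 0 →
      v 3 ≠ 0 ∧ v 2 = v 3 * t := by
    intro t ht
    obtain ⟨c, rfl⟩ := hu ![0, 0, t, 1] (fun h => by simpa using congrFun h 3) rfl rfl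
      (by simpa using ht)
    have hc : c ≠ 0 := by rintro rfl; simp at hv
    simpa using hc
  by_cases h : c3 = 0
  · obtain ⟨c, hc⟩ := hu ![0, 0, 1, 0] (fun h => by simpa using congrFun h 2) rfl rfl
      (by simp [h])
    by_contra hcon
    obtain ⟨t, ht⟩ := cubic_root c0 c1 c2 c3 (by tauto)
    apply (hroot t ht).1
    rw [← hc]; simp
  · obtain ⟨r, hr⟩ := cubic_root c0 c1 c2 c3 (Or.inr (Or.inr h))
    obtain ⟨hv3, hv2⟩ := hroot r hr
    have huniq : ∀ t : K, c0 + c1 * t + c2 * t ^ 2 + c3 * t ^ 3 = 0 → t = r := by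
      intro t ht
      have := (hroot t ht).2
      rw [hv2] at this
      exact (mul_left_cancel₀ hv3 this).symm
    -- The quotient by `t - r` is `c3 t² + d t + e`.
    obtain ⟨t, ht⟩ := cubic_root (c1 + c2 * r + c3 * r ^ 2) (c2 + c3 * r) c3 0 (Or.inr (Or.inl h))
    have htr := huniq t (by linear_combination (t - r) * ht + hr)
    subst htr
    -- The remaining linear factor is `c3 t + (c2 + 2 c3 r)`.
    have hl := huniq (-(c2 + 2 * c3 * t) / c3) (by
      have : c3 * (-(c2 + 2 * c3 * t) / c3) = -(c2 + 2 * c3 * t) := by field_simp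
      set s := -(c2 + 2 * c3 * t) / c3
      linear_combination (s - t) ^ 2 * this + hr + (s - t) * ht)
    rw [div_eq_iff h] at hl
    have hc2 : c2 = 0 := by linear_combination -hl - t * c3 * h3
    refine ⟨?_, hc2⟩
    subst hc2
    linear_combination ht - t ^ 2 * c3 * h3

/-! ### The pencil of residual cubics and the normal form -/

/-- The residual cubics of `x₀ A + x₁ B` along `x₀ = x₁ = 0` are the members `μ A + λ B` of the
pencil spanned by `A` and `B`, the plane being `λ x₀ = μ x₁`; the scalars `s, t` witness
`(μ, λ) ≠ (0, 0)`. -/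
lemma CuspVec.pencil [IsAlgClosed K] {A B : MvPolynomial (Fin 4) K}
    (hF : CuspVec (X 0 * A + X 1 * B)) (hA : A.IsHomogeneous 3) (hB : B.IsHomogeneous 3)
    (μ lam s t : K) (hst : s * μ + t * lam = 1) :
    (∃ v : Fin 4 → K, v ≠ 0 ∧ v 0 = 0 ∧ v 1 = 0 ∧ eval v (C μ * A + C lam * B) = 0 ∧
      ∀ u : Fin 4 → K, u ≠ 0 → u 0 = 0 → u 1 = 0 → eval u (C μ * A + C lam * B) = 0 →
        ∃ c : K, c • u = v) ∧
    ∀ v : Fin 4 → K, v ≠ 0 → v 0 = 0 → v 1 = 0 → eval v (C μ * A + C lam * B) = 0 →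
      ∀ w : Fin 4 → K, lam * w 0 = μ * w 1 → dirDeriv (C μ * A + C lam * B) v w = 0 := by
  -- A member of the pencil vanishing on the whole line would make `A` and `B` vanish together at
  -- a zero of the complementary member `t A - s B`, which would be a singular point.
  have hne : ∃ v : Fin 4 → K, v 0 = 0 ∧ v 1 = 0 ∧ eval v (C μ * A + C lam * B) ≠ 0 := by
    by_contra hcon
    push Not at hcon
    obtain ⟨v, hv, h0, h1, hz⟩ := cubic_zero ((hA.C_mul t).sub (hB.C_mul s))
    have hG := hcon v h0 h1
    simp only [map_add, map_sub, map_mul, eval_C] at hz hG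
    have hAv : eval v A = 0 := by
      linear_combination s * hG + lam * hz - eval v A * hst
    have hBv : eval v B = 0 := by
      linear_combination t * hG - μ * hz - eval v B * hst
    obtain ⟨w, hw⟩ := hF.smooth v h0 h1 hv
    apply hw
    simp [dirDeriv_add, dirDeriv_mul, h0, h1, hAv, hBv]
  have hdecomp := hF.res (C lam * X 0 - C μ * X 1) (C s * X 0 + C t * X 1)
    (C μ * A + C lam * B) (C t * A - C s * B)
    (((isHomogeneous_X K 0).C_mul _).sub ((isHomogeneous_X K 1).C_mul _))
    (((isHomogeneous_X K 0).C_mul _).add ((isHomogeneous_X K 1).C_mul _))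
    ((hA.C_mul _).add (hB.C_mul _)) ((hA.C_mul _).sub (hB.C_mul _)) ?_ ?_ ?_
  · refine ⟨hdecomp.1, fun v hv h0 h1 hG w hw => hdecomp.2 v hv h0 h1 hG w ?_⟩
    simp [hw]
  · intro v
    simp only [map_add, map_sub, map_mul, eval_C, eval_X]
    constructor
    · rintro ⟨h0, h1⟩; simp [h0, h1]
    · rintro ⟨h, h'⟩
      constructor
      · linear_combination t * h + μ * h' - v 0 * hst
      · linear_combination lam * h' - s * h - v 1 * hst
  -- On the plane, parametrised near the line by `v + u (μ, λ, 0, 0)`, the form equals `u G`.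
  · obtain ⟨v, h0, h1, hG⟩ := hne
    by_contra hcon
    push Not at hcon
    apply hG
    apply eval_zero_of_punctured _ v ![μ, lam, 0, 0]
    intro u hu
    have := hcon (v + u • ![μ, lam, 0, 0]) (by
      simp only [map_sub, map_mul, eval_C, eval_X, Pi.add_apply, h0, h1, Pi.smul_apply,
        smul_eq_mul, Matrix.cons_val_zero, Matrix.cons_val_one]
      ring)
    simp only [map_add, map_mul, eval_C, eval_X] at this ⊢
    simp only [Pi.add_apply, h0, h1, Pi.smul_apply, smul_eq_mul, Matrix.cons_val_zero,
      Matrix.cons_val_one, zero_add] at this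
    apply (mul_eq_zero.1 _).resolve_left hu
    linear_combination this
  · have hst' : (C s * C μ + C t * C lam : MvPolynomial (Fin 4) K) = 1 := by
      rw [← C_mul, ← C_mul, ← C_add, hst, C_1]
    linear_combination (-(X 0 * A) - X 1 * B) * hst'

/-- Explicit binary forms in `x₀, x₁` are homogeneous and involve only `x₀` and `x₁`. -/
lemma binary_form_props (n : ℕ) (a : ℕ → K) :
    (∑ i ∈ Finset.range (n + 1), C (a i) * X 0 ^ (n - i) * X 1 ^ i :
      MvPolynomial (Fin 4) K).IsHomogeneous n ∧
    (∑ i ∈ Finset.range (n + 1), C (a i) * X 0 ^ (n - i) * X 1 ^ i :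
      MvPolynomial (Fin 4) K).vars ⊆ {0, 1} := by
  constructor
  · refine IsHomogeneous.sum _ _ _ fun i hi => ?_
    have hi' := Finset.mem_range.1 hi
    have h := ((isHomogeneous_C (Fin 4) (a i)).mul
      ((isHomogeneous_X K (0 : Fin 4)).pow (n - i))).mul ((isHomogeneous_X K (1 : Fin 4)).pow i)
    convert h using 1
    omega
  · have h : (∑ i ∈ Finset.range (n + 1), C (a i) * X 0 ^ (n - i) * X 1 ^ i :
        MvPolynomial (Fin 4) K) ∈ supported K ({0, 1} : Set (Fin 4)) := by
      refine Subalgebra.sum_mem _ fun i _ => ?_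
      refine Subalgebra.mul_mem _ (Subalgebra.mul_mem _ (Subalgebra.algebraMap_mem _ (a i))
        (Subalgebra.pow_mem _ (X_mem_supported.2 (by simp)) _))
        (Subalgebra.pow_mem _ (X_mem_supported.2 (by simp)) _)
    rw [mem_supported] at h
    intro i hi
    simpa using h hi

/-- The cusp condition in the plane `x₀ = m³ x₁`: its residual cubic meets the line at
`(0 : 0 : m : 1)`, and `(m³, 1, 0, 0)` is a direction of the plane. -/
lemma CuspVec.quadratic_part_zero [IsAlgClosed K] [CharP K 3] {P Q R : MvPolynomial (Fin 4) K}
    (hP : P.IsHomogeneous 2) (hQ : Q.IsHomogeneous 2) (hR : R.IsHomogeneous 2)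
    (hF : CuspVec (X 0 * (X 0 * P + X 1 * Q + X 3 ^ 3) + X 1 * (X 1 * R - X 2 ^ 3))) (m : K) :
    eval ![0, 0, m, 1] R + eval ![0, 0, m, 1] Q * m ^ 3 + eval ![0, 0, m, 1] P * m ^ 6 = 0 := by
  have h3 : (3 : K) = 0 := by exact_mod_cast CharP.cast_eq_zero K 3
  have hX : ∀ i : Fin 4, (X i ^ 3 : MvPolynomial (Fin 4) K).IsHomogeneous 3 := fun i =>
    (isHomogeneous_X K i).pow 3
  have hA : (X 0 * P + X 1 * Q + X 3 ^ 3 : MvPolynomial (Fin 4) K).IsHomogeneous 3 :=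
    (((isHomogeneous_X K 0).mul hP).add ((isHomogeneous_X K 1).mul hQ)).add (hX 3)
  have hB : (X 1 * R - X 2 ^ 3 : MvPolynomial (Fin 4) K).IsHomogeneous 3 :=
    ((isHomogeneous_X K 1).mul hR).sub (hX 2)
  have h := (hF.pencil hA hB (m ^ 3) 1 0 1 (by ring)).2 ![0, 0, m, 1]
    (fun h => by simpa using congrFun h 3) rfl rfl (by simp) ![m ^ 3, 1, 0, 0] (by simp)
  have hsub : (X 1 * R - X 2 ^ 3 : MvPolynomial (Fin 4) K) = X 1 * R + C (-1) * X 2 ^ 3 := by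
    simp [sub_eq_add_neg]
  have hpow : ∀ (i : Fin 4) (v w : Fin 4 → K),
      dirDeriv (X i ^ 3 : MvPolynomial (Fin 4) K) v w = 0 := by
    intro i v w
    rw [pow_succ, pow_two, dirDeriv_mul, dirDeriv_mul, dirDeriv_X]
    simp only [map_mul, eval_X]
    linear_combination v i ^ 2 * w i * h3
  rw [hsub] at h
  simp only [dirDeriv_add, dirDeriv_mul, dirDeriv_C, dirDeriv_X, hpow, eval_C, eval_X] at h
  simp at h
  linear_combination h

/-- Once the pencil on the line is `(x₃³, -x₂³)`, the cusp condition removes all monomials of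
bidegree `(2, 2)` in `(x₀, x₁)` and `(x₂, x₃)`. -/
lemma CuspVec.normal_form [IsAlgClosed K] [CharP K 3] {P Q R : MvPolynomial (Fin 4) K}
    (hP : P.IsHomogeneous 2) (hQ : Q.IsHomogeneous 2) (hR : R.IsHomogeneous 2)
    (hF : CuspVec (X 0 * (X 0 * P + X 1 * Q + X 3 ^ 3) + X 1 * (X 1 * R - X 2 ^ 3))) :
    ∃ q3 q3' q4 : MvPolynomial (Fin 4) K,
      q3.IsHomogeneous 3 ∧ q3'.IsHomogeneous 3 ∧ q4.IsHomogeneous 4 ∧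
      q3.vars ⊆ {0, 1} ∧ q3'.vars ⊆ {0, 1} ∧ q4.vars ⊆ {0, 1} ∧
      X 0 * (X 0 * P + X 1 * Q + X 3 ^ 3) + X 1 * (X 1 * R - X 2 ^ 3) =
        X 0 * X 3 ^ 3 - X 1 * X 2 ^ 3 + X 2 * q3 + X 3 * q3' + q4 := by
  have hq := hF.quadratic_part_zero hP hQ hR
  obtain ⟨P0, P1, p0, p1, p2, hP0, hP1, rfl⟩ := hom_two hP
  obtain ⟨Q0, Q1, r0, r1, r2, hQ0, hQ1, rfl⟩ := hom_two hQ
  obtain ⟨R0, R1, s0, s1, s2, hR0, hR1, rfl⟩ := hom_two hR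
  -- The monomials `x₂², x₂x₃, x₃²` at `(m, 1)` give `m², m, 1`, with exponents distinct modulo 3,
  -- and their coefficients are combined with weights `m⁶, m³, 1`, so the nine coefficients appear separately in degrees `0, …, 8`.
  obtain ⟨⟨rfl, rfl, rfl⟩, ⟨rfl, rfl, rfl⟩, rfl, rfl, rfl⟩ :=
    coeffs_zero (c0 := s0) (c1 := s1) (c2 := s2) (c3 := r0) (c4 := r1) (c5 := r2)
      (c6 := p0) (c7 := p1) (c8 := p2) (fun t => by
        have := hq t
        simp at this
        linear_combination this)
  obtain ⟨a0, b0, c0, d0, h0⟩ := hom_one hP0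
  obtain ⟨a1, b1, c1, d1, h1⟩ := hom_one (hP1.add hQ0)
  obtain ⟨a2, b2, c2, d2, h2⟩ := hom_one (hQ1.add hR0)
  obtain ⟨a3, b3, c3, d3, h3⟩ := hom_one hR1
  let c : ℕ → K := fun i => if i = 0 then c0 else if i = 1 then c1 else if i = 2 then c2 else c3
  let d : ℕ → K := fun i => if i = 0 then d0 else if i = 1 then d1 else if i = 2 then d2 else d3
  let e : ℕ → K := fun i => if i = 0 then a0 else if i = 1 then a1 + b0 else
    if i = 2 then a2 + b1 else if i = 3 then a3 + b2 else b3
  refine ⟨_, _, _, (binary_form_props 3 c).1, (binary_form_props 3 d).1,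
    (binary_form_props 4 e).1, (binary_form_props 3 c).2, (binary_form_props 3 d).2,
    (binary_form_props 4 e).2, ?_⟩
  simp [Finset.sum_range_succ, c, d, e]
  linear_combination X 0 ^ 3 * h0 + X 0 ^ 2 * X 1 * h1 + X 0 * X 1 ^ 2 * h2 + X 1 ^ 3 * h3

/-- Inseparability makes `A` and `B` restrict to cubes of linear forms on the line. Smoothness
makes these forms independent, so they can be taken as the coordinates `x₃` and `-x₂`. -/
lemma CuspVec.exists_second_change [IsAlgClosed K] [CharP K 3] {F : MvPolynomial (Fin 4) K}
    (hF4 : F.IsHomogeneous 4) (hF : CuspVec F) :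
    ∃ (g : (Fin 4 → K) ≃ₗ[K] (Fin 4 → K)) (P Q R : MvPolynomial (Fin 4) K),
      P.IsHomogeneous 2 ∧ Q.IsHomogeneous 2 ∧ R.IsHomogeneous 2 ∧
      (∀ v, g v 0 = v 0 ∧ g v 1 = v 1) ∧
      linSubst g.symm F = X 0 * (X 0 * P + X 1 * Q + X 3 ^ 3) + X 1 * (X 1 * R - X 2 ^ 3) := by
  have h3 : (3 : K) = 0 := by exact_mod_cast CharP.cast_eq_zero K 3
  obtain ⟨A, B, c0, c1, c2, c3, c4, hA, hB, rfl⟩ := hom_four hF4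
  -- `F` vanishes on the line, hence has no pure part in `x₂, x₃`.
  obtain ⟨⟨rfl, rfl, rfl⟩, ⟨rfl, rfl, -⟩, -⟩ :=
    coeffs_zero (c0 := c0) (c1 := c1) (c2 := c2) (c3 := c3) (c4 := c4) (c5 := 0)
      (c6 := 0) (c7 := 0) (c8 := 0) (fun t => by
        have := hF.vanish ![0, 0, t, 1] rfl rfl
        simp at this
        linear_combination this)
  simp only [map_zero, zero_mul, add_zero] at hF ⊢
  obtain ⟨v, hv, -, -, -, hvu⟩ := (hF.pencil hA hB 1 0 1 0 (by ring)).1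
  obtain ⟨v', hv', -, -, -, hvu'⟩ := (hF.pencil hA hB 0 1 0 1 (by ring)).1
  obtain ⟨A0, A1, a0, a1, a2, a3, hA0, hA1, hAe⟩ := hom_three hA
  obtain ⟨B0, B1, b0, b1, b2, b3, hB0, hB1, hBe⟩ := hom_three hB
  obtain ⟨rfl, rfl⟩ := middle_zero a0 a1 a2 a3 v (fun u hu h0 h1 hz => hvu u hu h0 h1 (by
    rw [hAe]; simpa [h0, h1] using hz)) hv
  obtain ⟨rfl, rfl⟩ := middle_zero b0 b1 b2 b3 v' (fun u hu h0 h1 hz => hvu' u hu h0 h1 (by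
    rw [hBe]; simpa [h0, h1] using hz)) hv'
  obtain ⟨α3, rfl⟩ := IsAlgClosed.exists_pow_nat_eq a0 (n := 3) (by norm_num)
  obtain ⟨α2, rfl⟩ := IsAlgClosed.exists_pow_nat_eq a3 (n := 3) (by norm_num)
  obtain ⟨β3, rfl⟩ := IsAlgClosed.exists_pow_nat_eq b0 (n := 3) (by norm_num)
  obtain ⟨β2, rfl⟩ := IsAlgClosed.exists_pow_nat_eq b3 (n := 3) (by norm_num)
  have hcube : ∀ x y : K, x ^ 3 + y ^ 3 = (x + y) ^ 3 := by
    intro x y; linear_combination -(x ^ 2 * y + x * y ^ 2) * h3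
  have hnz : ∀ x y : K, α2 * x + α3 * y = 0 → β2 * x + β3 * y = 0 → x = 0 ∧ y = 0 := by
    intro x y hα hβ
    by_contra hxy
    obtain ⟨w, hw⟩ := hF.smooth ![0, 0, x, y] rfl rfl (fun h => hxy
      ⟨by simpa using congrFun h 2, by simpa using congrFun h 3⟩)
    have hAv : eval ![0, 0, x, y] A = 0 := by
      have := hcube (α2 * x) (α3 * y)
      rw [hα] at this
      rw [hAe]; simp; linear_combination this
    have hBv : eval ![0, 0, x, y] B = 0 := by
      have := hcube (β2 * x) (β3 * y)
      rw [hβ] at this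
      rw [hBe]; simp; linear_combination this
    apply hw
    simp [dirDeriv_add, dirDeriv_mul, hAv, hBv]
  have hδ : α2 * β3 - α3 * β2 ≠ 0 := by
    intro hδ
    obtain ⟨h1, h2⟩ := hnz α3 (-α2) (by ring) (by linear_combination -hδ)
    obtain ⟨h3, h4⟩ := hnz β3 (-β2) (by linear_combination hδ) (by ring)
    rw [neg_eq_zero] at h2 h4
    simpa using (hnz 1 0 (by rw [h2]; ring) (by rw [h4]; ring)).1
  set δ := α2 * β3 - α3 * β2 with hδdef
  let g : (Fin 4 → K) ≃ₗ[K] (Fin 4 → K) :=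
    { toFun := fun v => ![v 0, v 1, -(β2 * v 2 + β3 * v 3), α2 * v 2 + α3 * v 3]
      invFun := fun v => ![v 0, v 1, (β3 * v 3 + α3 * v 2) / δ, -(β2 * v 3 + α2 * v 2) / δ]
      map_add' := fun p q => by ext i; fin_cases i <;> simp <;> ring
      map_smul' := fun c q => by ext i; fin_cases i <;> simp <;> ring
      left_inv := fun p => by
        ext i; fin_cases i
        · rfl
        · rfl
        · simp; rw [div_eq_iff hδ]; ring
        · simp; rw [div_eq_iff hδ]; ring
      right_inv := fun p => by
        ext i; fin_cases i
        · rfl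
        · rfl
        · simp; field_simp; ring
        · simp; field_simp; ring }
  refine ⟨g, linSubst g.symm A0, linSubst g.symm A1 + linSubst g.symm B0, linSubst g.symm B1,
    linSubst_hom _ hA0, (linSubst_hom _ hA1).add (linSubst_hom _ hB0), linSubst_hom _ hB1,
    fun v => ⟨rfl, rfl⟩, ?_⟩
  apply MvPolynomial.funext
  intro v
  obtain ⟨u, rfl⟩ := g.surjective v
  have g0 : g u 0 = u 0 := rfl
  have g1 : g u 1 = u 1 := rfl
  have g2 : g u 2 = -(β2 * u 2 + β3 * u 3) := rfl
  have g3 : g u 3 = α2 * u 2 + α3 * u 3 := rfl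
  rw [hAe, hBe]
  simp only [eval_linSubst, map_add, map_sub, map_mul, map_pow, eval_X, eval_C, g0, g1, g2, g3,
    g.symm_apply_apply]
  linear_combination u 0 * hcube (α2 * u 2) (α3 * u 3) + u 1 * hcube (β2 * u 2) (β3 * u 3)

/-- A quartic surface containing a cuspidal line is projectively equivalent to a member
of the family 𝒞 : x₀x₃³ − x₁x₂³ + x₂·q₃(x₀,x₁) + x₃·q₃′(x₀,x₁) + q₄(x₀,x₁),
by a transformation carrying the cuspidal line to `{x₀ = x₁ = 0}`. -/
theorem statement6 (K : Type*) [Field K] [IsAlgClosed K] [CharP K 3]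
    (F : MvPolynomial (Fin 4) K) (hF0 : F ≠ 0) (hF4 : F.IsHomogeneous 4)
    (ℓ : Set (Pt K)) (hℓ : ℓ ∈ LinesOn F) (hcusp : CuspidalLine F ℓ) :
    ∃ (g : (Fin 4 → K) ≃ₗ[K] (Fin 4 → K)) (q3 q3' q4 : MvPolynomial (Fin 4) K)
      (lam : K), lam ≠ 0 ∧
      q3.IsHomogeneous 3 ∧ q3'.IsHomogeneous 3 ∧ q4.IsHomogeneous 4 ∧
      q3.vars ⊆ {0, 1} ∧ q3'.vars ⊆ {0, 1} ∧ q4.vars ⊆ {0, 1} ∧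
      projMap g '' ℓ = {p : Pt K | PZero (X 0) p ∧ PZero (X 1) p} ∧
      linSubst g.symm F =
        C lam * (X 0 * X 3 ^ 3 - X 1 * X 2 ^ 3 + X 2 * q3 + X 3 * q3' + q4) := by
  obtain ⟨⟨W, hW2, rfl⟩, hsurf⟩ := hℓ
  obtain ⟨g₁, hg₁⟩ := exists_straighten W hW2
  obtain ⟨g₂, P, Q, R, hP, hQ, hR, hg₂, hF₂⟩ :=
    (cuspVec_of_cuspidal hF4 W hsurf hcusp g₁ hg₁).exists_second_change (linSubst_hom _ hF4)
  have hg : ∀ v, v ∈ W ↔ (g₁.trans g₂) v 0 = 0 ∧ (g₁.trans g₂) v 1 = 0 := by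
    intro v
    rw [hg₁, LinearEquiv.trans_apply, (hg₂ _).1, (hg₂ _).2]
  rw [← linSubst_trans] at hF₂
  have hcv := cuspVec_of_cuspidal hF4 W hsurf hcusp (g₁.trans g₂) hg
  rw [hF₂] at hcv
  obtain ⟨q3, q3', q4, h1, h2, h3, h4, h5, h6, hnf⟩ := hcv.normal_form hP hQ hR
  exact ⟨g₁.trans g₂, q3, q3', q4, 1, one_ne_zero, h1, h2, h3, h4, h5, h6,
    projMap_image W _ hg, by rw [hF₂, hnf, C_1, one_mul]⟩

end
end

section
/- For every a ∈ K with a ≠ 0, the quartic surface X_a ⊆ ℙ³(K) defined by x₁³x₂ − x₁x₂³ + x₀³x₃ − x₀x₃³ = a·x₀²x₁x₂ is smooth and contains exactly 58 lines. -/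
/-!
Write `x = (x₀, x₁, x₂, x₃)`. In characteristic 3 the partial derivative of the form in the
direction `x₃` is `x₀³`, and once `x₀ = 0` the other three force `x₃ = x₂ = x₁ = 0`; hence the
surface is smooth.

For the lines, consider the hyperplane `x₀ = 0`. It cuts the surface in
`x₁x₂(x₁ - x₂)(x₁ + x₂) = 0`, that is, in four lines through `(0:0:0:1)`. Any other line on the
surface is spanned by some `p` with `p₀ = 1` and some `q` with `q₀ = 0`. Because cubing is additive,
`F(p + s q)` is easy to expand in `s` (`coeffs_of_line`): its `s²`-coefficient is `-a q₁ q₂`, so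
`q₁ q₂ = 0`, and the remaining coefficients show that the line is one of

* `⟨(0,0,1,m), (1,-m³,0,w)⟩` with `m⁹ - a m³ - m = 0` and `w³ = w`,
* `⟨(0,1,0,m), (1,0,m³,w)⟩` with `m⁹ + a m³ - m = 0` and `w³ = w`.

The polynomials `X⁹ ∓ a X³ - X` and `X³ - X` have derivative `-1` and are thus separable, so each
family has `9 · 3 = 27` members, and the total is `4 + 27 + 27 = 58`.
-/

noncomputable section

open MvPolynomial

variable {K : Type*} [Field K]

/-- The quartic form x₁³x₂ − x₁x₂³ + x₀³x₃ − x₀x₃³ − a·x₀²x₁x₂. -/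
def F16 (K : Type*) [Field K] (a : K) : MvPolynomial (Fin 4) K :=
  X 1 ^ 3 * X 2 - X 1 * X 2 ^ 3 + X 0 ^ 3 * X 3 - X 0 * X 3 ^ 3
    - C a * (X 0 ^ 2 * X 1 * X 2)

/-! ### Smoothness -/

lemma eval_F16 (a : K) (v : Fin 4 → K) : eval v (F16 K a) =
    v 1 ^ 3 * v 2 - v 1 * v 2 ^ 3 + v 0 ^ 3 * v 3 - v 0 * v 3 ^ 3 - a * (v 0 ^ 2 * v 1 * v 2) := by
  simp [F16]

lemma cube_add [CharP K 3] (x y : K) : (x + y) ^ 3 = x ^ 3 + y ^ 3 := by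
  have : Fact (Nat.Prime 3) := ⟨Nat.prime_three⟩
  exact add_pow_char x y 3

lemma F16_smooth [CharP K 3] (a : K) (p : Pt K) : ¬ IsSingPt (F16 K a) p := by
  rintro ⟨-, h⟩
  have hm : p.rep ∈ p.submodule := by
    rw [Projectivization.submodule_eq]; exact Submodule.mem_span_singleton_self _
  have h3 : (3 : K) = 0 := three_eq_zero
  have h0 := h 0 _ hm
  have h1 := h 1 _ hm
  have h2 := h 2 _ hm
  have hx3 := h 3 _ hm
  apply p.rep_nonzero
  generalize p.rep = v at *
  simp [F16, pderiv_X, Derivation.leibniz_pow, h3] at h0 h1 h2 hx3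
  have e0 : v 0 = 0 := hx3
  simp [e0] at h0 h1 h2
  ext i
  fin_cases i <;> simp [*]

/-! ### Lines as subspaces -/

/-- The 2-dimensional subspaces of `K⁴` whose projectivization lies on the surface. -/
def planesOn (a : K) : Set (Submodule K (Fin 4 → K)) :=
  {W | Module.finrank K W = 2 ∧ ∀ v ∈ W, eval v (F16 K a) = 0}

lemma encard_linesOn (a : K) : (LinesOn (F16 K a)).encard = (planesOn a).encard := by
  have hinj : Function.Injective
      (fun W : Submodule K (Fin 4 → K) => {p : Pt K | p.submodule ≤ W}) := by
    intro W W' h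
    have key : ∀ W W' : Submodule K (Fin 4 → K),
        {p : Pt K | p.submodule ≤ W} = {p : Pt K | p.submodule ≤ W'} → W ≤ W' := by
      intro W W' h v hv
      by_cases hv0 : v = 0
      · simp [hv0]
      · have h1 : Projectivization.mk K v hv0 ∈ {p : Pt K | p.submodule ≤ W} := by
          simp [Projectivization.submodule_mk, hv]
        rw [h] at h1
        simpa [Projectivization.submodule_mk] using h1
    exact le_antisymm (key _ _ h) (key _ _ h.symm)
  rw [← hinj.encard_image]
  congr 1
  ext ℓ
  constructor
  · rintro ⟨⟨W, hW, rfl⟩, hs⟩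
    refine ⟨W, ⟨hW, fun v hv => ?_⟩, rfl⟩
    by_cases hv0 : v = 0
    · rw [eval_F16, hv0]; simp
    · have h1 : Projectivization.mk K v hv0 ∈ {p : Pt K | p.submodule ≤ W} := by
        simp [Projectivization.submodule_mk, hv]
      exact hs h1 v (by simp [Projectivization.submodule_mk, Submodule.mem_span_singleton_self])
  · rintro ⟨W, ⟨hW, hF⟩, rfl⟩
    exact ⟨⟨W, hW, rfl⟩, fun p hp v hv => hF v (hp hv)⟩

lemma finrank_span_two {p q : Fin 4 → K} (h : LinearIndependent K ![p, q]) :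
    Module.finrank K (Submodule.span K {p, q}) = 2 := by
  have := finrank_span_eq_card h
  rwa [Matrix.range_cons, Matrix.range_cons, Matrix.range_empty, Set.union_empty,
    Set.singleton_union, Fintype.card_fin] at this

lemma eq_span_of_mem {W : Submodule K (Fin 4 → K)} (hW : Module.finrank K W = 2)
    {p q : Fin 4 → K} (h : LinearIndependent K ![p, q]) (hp : p ∈ W) (hq : q ∈ W) :
    W = Submodule.span K {p, q} := by
  symm
  apply Submodule.eq_of_le_of_finrank_eq
  · rw [Submodule.span_le]
    rintro x (rfl | rfl) <;> assumption
  · rw [finrank_span_two h, hW]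

lemma exists_pair {W : Submodule K (Fin 4 → K)} (hW : Module.finrank K W = 2) :
    ∃ p ∈ W, ∃ q ∈ W, LinearIndependent K ![p, q] := by
  have b := Module.finBasisOfFinrankEq K W hW
  refine ⟨b 0, (b 0).2, b 1, (b 1).2, ?_⟩
  have h := b.linearIndependent.map' W.subtype (by simp)
  have e : ![((b 0 : W) : Fin 4 → K), (b 1 : W)] = W.subtype ∘ b := by
    ext i
    fin_cases i <;> rfl
  rw [e]
  exact h

/-! ### Coefficient comparison and root counts -/

lemma quartic_coeffs [Infinite K] (c0 c1 c2 c3 c4 : K)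
    (h : ∀ s : K, c0 + c1 * s + c2 * s ^ 2 + c3 * s ^ 3 + c4 * s ^ 4 = 0) :
    c0 = 0 ∧ c1 = 0 ∧ c2 = 0 ∧ c3 = 0 ∧ c4 = 0 := by
  have hP : (Polynomial.C c0 + Polynomial.C c1 * Polynomial.X + Polynomial.C c2 * Polynomial.X ^ 2
      + Polynomial.C c3 * Polynomial.X ^ 3 + Polynomial.C c4 * Polynomial.X ^ 4
      : Polynomial K) = 0 := by
    apply Polynomial.funext
    intro s
    simpa using h s
  have e := fun n => congrArg (fun P => Polynomial.coeff P n) hP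
  have e0 := e 0
  have e1 := e 1
  have e2 := e 2
  have e3 := e 3
  have e4 := e 4
  simp [Polynomial.coeff_X, Polynomial.coeff_C] at e0 e1 e2 e3 e4
  exact ⟨e0, e1, e2, e3, e4⟩

lemma encard_roots [IsAlgClosed K] (P : Polynomial K) (hP : P.Separable) :
    {x : K | P.eval x = 0}.encard = P.natDegree := by
  have h := Polynomial.card_rootSet_eq_natDegree (K := K) hP (IsAlgClosed.splits _)
  have e : {x : K | P.eval x = 0} = P.rootSet K := by
    ext x
    simp [Polynomial.mem_rootSet, hP.ne_zero]
  rw [e, ← h, Set.encard_eq_coe_toFinset_card, Set.toFinset_card]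

/-- The slopes `m` of the first family of lines, and with `-a` for `a` those of the second. -/
def slopes (a : K) : Set K := {m | m ^ 9 - a * m ^ 3 - m = 0}

/-- The roots of `w³ = w`, i.e. the prime field `𝔽₃`. -/
def cubeFix (K : Type*) [Field K] : Set K := {w | w ^ 3 - w = 0}

lemma separable_of_derivative {P : Polynomial K} (h : Polynomial.derivative P = -1) :
    P.Separable := by
  refine ⟨0, -1, ?_⟩
  rw [h]; ring

lemma encard_slopes [IsAlgClosed K] [CharP K 3] (a : K) : (slopes a).encard = 9 := by
  have h3 : (3 : K) = 0 := three_eq_zero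
  have h9 : (9 : K) = 0 := by linear_combination 3 * h3
  have h := encard_roots
    (Polynomial.X ^ 9 - Polynomial.C a * Polynomial.X ^ 3 - Polynomial.X : Polynomial K)
    (separable_of_derivative (by
      simp only [Polynomial.derivative_sub, Polynomial.derivative_X_pow, Polynomial.derivative_X,
        Polynomial.derivative_C_mul, Nat.cast_ofNat, h3, h9, map_zero]
      ring))
  have hd : (Polynomial.X ^ 9 - Polynomial.C a * Polynomial.X ^ 3 - Polynomial.X
      : Polynomial K).natDegree = 9 := by compute_degree!
  rw [hd] at h
  simpa [slopes] using h

lemma encard_cubeFix [IsAlgClosed K] [CharP K 3] : (cubeFix K).encard = 3 := by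
  have h3 : (3 : K) = 0 := three_eq_zero
  have h := encard_roots (Polynomial.X ^ 3 - Polynomial.X : Polynomial K)
    (separable_of_derivative (by
      simp only [Polynomial.derivative_sub, Polynomial.derivative_X_pow, Polynomial.derivative_X,
        Nat.cast_ofNat, h3, map_zero]
      ring))
  have hd : (Polynomial.X ^ 3 - Polynomial.X : Polynomial K).natDegree = 3 := by compute_degree!
  rw [hd] at h
  simpa [cubeFix] using h

/-! ### The explicit lines -/

/-- The line `x₀ = x₁ = 0`. -/
def planeInf (K : Type*) [Field K] : Submodule K (Fin 4 → K) :=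
  Submodule.span K {![0, 0, 1, 0], ![0, 0, 0, 1]}

/-- The line `x₀ = 0`, `x₂ = t x₁`. -/
def planeO (t : K) : Submodule K (Fin 4 → K) :=
  Submodule.span K {![0, 1, t, 0], ![0, 0, 0, 1]}

/-- The line `x₁ = -m³ x₀`, `x₃ = w x₀ + m x₂`, for `x = (m, w)`. -/
def planeA (x : K × K) : Submodule K (Fin 4 → K) :=
  Submodule.span K {![0, 0, 1, x.1], ![1, -x.1 ^ 3, 0, x.2]}

/-- The line `x₂ = m³ x₀`, `x₃ = w x₀ + m x₁`, for `x = (m, w)`. -/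
def planeB (x : K × K) : Submodule K (Fin 4 → K) :=
  Submodule.span K {![0, 1, 0, x.1], ![1, 0, x.1 ^ 3, x.2]}

lemma mem_planeInf (v : Fin 4 → K) : v ∈ planeInf K ↔ v 0 = 0 ∧ v 1 = 0 := by
  rw [planeInf, Submodule.mem_span_pair]
  constructor
  · rintro ⟨c, d, rfl⟩; simp
  · rintro ⟨h0, h1⟩
    refine ⟨v 2, v 3, ?_⟩
    ext i; fin_cases i <;> simp [h0, h1]

lemma mem_planeO (t : K) (v : Fin 4 → K) : v ∈ planeO t ↔ v 0 = 0 ∧ v 2 = v 1 * t := by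
  rw [planeO, Submodule.mem_span_pair]
  constructor
  · rintro ⟨c, d, rfl⟩; simp
  · rintro ⟨h0, h1⟩
    refine ⟨v 1, v 3, ?_⟩
    ext i; fin_cases i <;> simp [h0, h1]

lemma mem_planeA (x : K × K) (v : Fin 4 → K) :
    v ∈ planeA x ↔ v 1 = -(v 0 * x.1 ^ 3) ∧ v 3 = v 2 * x.1 + v 0 * x.2 := by
  rw [planeA, Submodule.mem_span_pair]
  constructor
  · rintro ⟨c, d, rfl⟩; simp
  · rintro ⟨h0, h1⟩
    refine ⟨v 2, v 0, ?_⟩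
    ext i; fin_cases i <;> simp [h0, h1]

lemma mem_planeB (x : K × K) (v : Fin 4 → K) :
    v ∈ planeB x ↔ v 2 = v 0 * x.1 ^ 3 ∧ v 3 = v 1 * x.1 + v 0 * x.2 := by
  rw [planeB, Submodule.mem_span_pair]
  constructor
  · rintro ⟨c, d, rfl⟩; simp
  · rintro ⟨h0, h1⟩
    refine ⟨v 1, v 0, ?_⟩
    ext i; fin_cases i <;> simp [h0, h1]

lemma linIndep_of_coords {p q : Fin 4 → K} (i j : Fin 4) (hpi : p i = 1) (hqi : q i = 0)
    (hqj : q j ≠ 0) : LinearIndependent K ![p, q] := by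
  rw [LinearIndependent.pair_iff]
  intro s t h
  have hi := congrFun h i
  have hj := congrFun h j
  simp [hpi, hqi] at hi
  simp [hi, hqj] at hj
  exact ⟨hi, hj⟩

lemma planeInf_mem (a : K) : planeInf K ∈ planesOn a := by
  refine ⟨finrank_span_two (linIndep_of_coords 2 3 (by simp) (by simp) (by simp)), ?_⟩
  intro v hv
  rw [mem_planeInf] at hv
  simp [eval_F16, hv.1, hv.2]

lemma planeO_mem [CharP K 3] (a : K) {t : K} (ht : t ∈ cubeFix K) : planeO t ∈ planesOn a := by
  refine ⟨finrank_span_two (linIndep_of_coords 1 3 (by simp) (by simp) (by simp)), ?_⟩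
  intro v hv
  rw [mem_planeO] at hv
  have ht' : t ^ 3 - t = 0 := ht
  rw [eval_F16, hv.1, hv.2]
  linear_combination (-(v 1) ^ 4) * ht'

lemma planeA_mem [CharP K 3] (a : K) {x : K × K} (hx : x ∈ slopes a ×ˢ cubeFix K) :
    planeA x ∈ planesOn a := by
  refine ⟨finrank_span_two (linIndep_of_coords 2 0 (by simp) (by simp) (by simp)), ?_⟩
  intro v hv
  rw [mem_planeA] at hv
  obtain ⟨h1, h2⟩ := hx
  have h1' : x.1 ^ 9 - a * x.1 ^ 3 - x.1 = 0 := h1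
  have h2' : x.2 ^ 3 - x.2 = 0 := h2
  rw [eval_F16, hv.1, hv.2, cube_add]
  linear_combination (-(v 0) ^ 3 * v 2) * h1' - (v 0) ^ 4 * h2'

lemma planeB_mem [CharP K 3] (a : K) {x : K × K} (hx : x ∈ slopes (-a) ×ˢ cubeFix K) :
    planeB x ∈ planesOn a := by
  refine ⟨finrank_span_two (linIndep_of_coords 1 0 (by simp) (by simp) (by simp)), ?_⟩
  intro v hv
  rw [mem_planeB] at hv
  obtain ⟨h1, h2⟩ := hx
  have h1' : x.1 ^ 9 - (-a) * x.1 ^ 3 - x.1 = 0 := h1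
  have h2' : x.2 ^ 3 - x.2 = 0 := h2
  rw [eval_F16, hv.1, hv.2, cube_add]
  linear_combination (-(v 0) ^ 3 * v 1) * h1' - (v 0) ^ 4 * h2'

/-! ### Classification -/

/-- The lines of the surface contained in `x₀ = 0`. -/
lemma classify_zero [Infinite K] [CharP K 3] (a : K) {W : Submodule K (Fin 4 → K)}
    (hW : W ∈ planesOn a) (h0 : ∀ v ∈ W, v 0 = 0) :
    W = planeInf K ∨ ∃ t ∈ cubeFix K, planeO t = W := by
  obtain ⟨hd, hF⟩ := hW
  have hf : ∀ v ∈ W, v 1 ^ 3 * v 2 - v 1 * v 2 ^ 3 = 0 := by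
    intro v hv
    have := hF v hv
    rw [eval_F16, h0 v hv] at this
    linear_combination this
  obtain ⟨p, hp, q, hq, hpq⟩ := exists_pair hd
  -- A pencil of binary vectors on which `x₁³x₂ - x₁x₂³` vanishes is proportional.
  have hdet : p 1 * q 2 - p 2 * q 1 = 0 := by
    have hs : ∀ s : K, (p 1 ^ 3 * p 2 - p 1 * p 2 ^ 3) + (p 1 ^ 3 * q 2 - p 2 ^ 3 * q 1) * s
        + 0 * s ^ 2 + (q 1 ^ 3 * p 2 - q 2 ^ 3 * p 1) * s ^ 3
        + (q 1 ^ 3 * q 2 - q 1 * q 2 ^ 3) * s ^ 4 = 0 := by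
      intro s
      have := hf (p + s • q) (W.add_mem hp (W.smul_mem s hq))
      simp only [Pi.add_apply, Pi.smul_apply, smul_eq_mul, cube_add] at this
      linear_combination this
    obtain ⟨e0, e1, -, -, -⟩ := quartic_coeffs _ _ _ _ _ hs
    by_cases hp1 : p 1 = 0
    · rw [hp1] at e1
      have e1' : p 2 ^ 3 * q 1 = 0 := by linear_combination -e1
      rcases mul_eq_zero.1 e1' with h | h
      · simp [hp1, pow_eq_zero_iff] at h ⊢; simp [h]
      · simp [hp1, h]
    · have : p 1 ^ 3 * (p 1 * q 2 - p 2 * q 1) = 0 := by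
        linear_combination p 1 * e1 - q 1 * e0
      exact (mul_eq_zero.1 this).resolve_left (pow_ne_zero _ hp1)
  have he : ∃ r ∈ W, r ≠ 0 ∧ r 1 = 0 ∧ r 2 = 0 := by
    rw [LinearIndependent.pair_iff] at hpq
    by_cases hq1 : q 1 = 0
    · by_cases hq2 : q 2 = 0
      · refine ⟨q, hq, ?_, hq1, hq2⟩
        rintro rfl
        simpa using hpq 0 1 (by simp)
      · refine ⟨q 2 • p + (-(p 2)) • q, W.add_mem (W.smul_mem _ hp) (W.smul_mem _ hq), ?_, ?_, ?_⟩
        · intro h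
          exact hq2 (hpq _ _ h).1
        · simp only [Pi.add_apply, Pi.smul_apply, smul_eq_mul]; linear_combination hdet
        · simp only [Pi.add_apply, Pi.smul_apply, smul_eq_mul]; ring
    · refine ⟨q 1 • p + (-(p 1)) • q, W.add_mem (W.smul_mem _ hp) (W.smul_mem _ hq), ?_, ?_, ?_⟩
      · intro h
        exact hq1 (hpq _ _ h).1
      · simp only [Pi.add_apply, Pi.smul_apply, smul_eq_mul]; ring
      · simp only [Pi.add_apply, Pi.smul_apply, smul_eq_mul]; linear_combination -hdet
  obtain ⟨r, hr, hr0, hr1, hr2⟩ := he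
  have hr3 : r 3 ≠ 0 := by
    intro h
    apply hr0
    ext i; fin_cases i <;> simp [h0 r hr, hr1, hr2, h]
  by_cases hall : ∀ v ∈ W, v 1 = 0
  · left
    apply Submodule.eq_of_le_of_finrank_eq
    · intro v hv
      rw [mem_planeInf]; exact ⟨h0 v hv, hall v hv⟩
    · rw [hd, (planeInf_mem a).1]
  · push Not at hall
    obtain ⟨v, hv, hv1⟩ := hall
    right
    have ht : v 2 / v 1 ∈ cubeFix K := by
      have := hf v hv
      have hm : v 1 ^ 4 * ((v 2 / v 1) ^ 3 - v 2 / v 1) = 0 := by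
        field_simp
        linear_combination -this
      exact (mul_eq_zero.1 hm).resolve_left (pow_ne_zero _ hv1)
    refine ⟨_, ht, ?_⟩
    apply Submodule.eq_of_le_of_finrank_eq
    · rw [planeO, Submodule.span_le]
      have hE : (![0, 0, 0, 1] : Fin 4 → K) ∈ W := by
        convert W.smul_mem (r 3)⁻¹ hr using 1
        ext i; fin_cases i <;> simp [h0 r hr, hr1, hr2, hr3]
      rintro x (rfl | rfl)
      · have := W.sub_mem (W.smul_mem (v 1)⁻¹ hv) (W.smul_mem ((v 1)⁻¹ * v 3) hE)
        refine (congrArg (· ∈ W) ?_).mpr this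
        ext i; fin_cases i <;> simp [h0 v hv, hv1]
        ring
      · exact hE
    · rw [hd, (planeO_mem a ht).1]

/-- The coefficients of `F(p + s q)` as a polynomial in `s`, when `p₀ = 1` and `q₀ = 0`. -/
lemma coeffs_of_line [Infinite K] [CharP K 3] (a : K) {W : Submodule K (Fin 4 → K)}
    (hW : W ∈ planesOn a) {p q : Fin 4 → K} (hp : p ∈ W) (hq : q ∈ W) (hp0 : p 0 = 1)
    (hq0 : q 0 = 0) :
    p 1 ^ 3 * q 2 - q 1 * p 2 ^ 3 + q 3 - a * (p 1 * q 2 + p 2 * q 1) = 0 ∧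
    a * (q 1 * q 2) = 0 ∧ q 1 ^ 3 * p 2 - p 1 * q 2 ^ 3 - q 3 ^ 3 = 0 := by
  have hs : ∀ s : K, (p 1 ^ 3 * p 2 - p 1 * p 2 ^ 3 + p 3 - p 3 ^ 3 - a * (p 1 * p 2))
      + (p 1 ^ 3 * q 2 - q 1 * p 2 ^ 3 + q 3 - a * (p 1 * q 2 + p 2 * q 1)) * s
      + (-(a * (q 1 * q 2))) * s ^ 2 + (q 1 ^ 3 * p 2 - p 1 * q 2 ^ 3 - q 3 ^ 3) * s ^ 3
      + (q 1 ^ 3 * q 2 - q 1 * q 2 ^ 3) * s ^ 4 = 0 := by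
    intro s
    have := hW.2 (p + s • q) (W.add_mem hp (W.smul_mem s hq))
    simp only [eval_F16, Pi.add_apply, Pi.smul_apply, smul_eq_mul, cube_add, hp0, hq0] at this
    linear_combination this
  obtain ⟨-, e1, e2, e3, -⟩ := quartic_coeffs _ _ _ _ _ hs
  exact ⟨e1, neg_eq_zero.1 e2, e3⟩

/-- The lines of the surface not contained in `x₀ = 0`. -/
lemma classify_one [Infinite K] [CharP K 3] (a : K) (ha : a ≠ 0) {W : Submodule K (Fin 4 → K)}
    (hW : W ∈ planesOn a) (h0 : ∃ v ∈ W, v 0 ≠ 0) :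
    (∃ x ∈ slopes a ×ˢ cubeFix K, planeA x = W) ∨
      ∃ x ∈ slopes (-a) ×ˢ cubeFix K, planeB x = W := by
  have h3 : (3 : K) = 0 := three_eq_zero
  obtain ⟨v, hv, hv0⟩ := h0
  obtain ⟨p, hp, hp0⟩ : ∃ p ∈ W, p 0 = 1 := ⟨(v 0)⁻¹ • v, W.smul_mem _ hv, by simp [hv0]⟩
  obtain ⟨q, hq, hq0, hqne⟩ : ∃ q ∈ W, q 0 = 0 ∧ q ≠ 0 := by
    obtain ⟨b, hb, c, hc, hbc⟩ := exists_pair hW.1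
    rw [LinearIndependent.pair_iff] at hbc
    by_cases hc0 : c 0 = 0
    · refine ⟨c, hc, hc0, ?_⟩
      rintro rfl
      simpa using hbc 0 1 (by simp)
    · refine ⟨c 0 • b + (-(b 0)) • c, W.add_mem (W.smul_mem _ hb) (W.smul_mem _ hc), ?_, ?_⟩
      · simp only [Pi.add_apply, Pi.smul_apply, smul_eq_mul]; ring
      · intro h
        exact hc0 (hbc _ _ h).1
  obtain ⟨e1, e2, -⟩ := coeffs_of_line a hW hp hq hp0 hq0
  have hq12 : q 1 = 0 ∨ q 2 = 0 := by simpa [ha] using e2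
  by_cases hq2 : q 2 = 0
  · have hq1 : q 1 ≠ 0 := by
      intro hq1
      simp [hq1, hq2] at e1
      apply hqne
      ext i; fin_cases i <;> simp [hq0, hq1, hq2, e1]
    right
    -- Normalize to `q₁ = 1` and `p₁ = 0`.
    have hqW : (q 1)⁻¹ • q ∈ W := W.smul_mem _ hq
    have hpW : p - (p 1) • ((q 1)⁻¹ • q) ∈ W := W.sub_mem hp (W.smul_mem _ hqW)
    obtain ⟨f1, -, f3⟩ := coeffs_of_line a hW hpW hqW (by simp [hp0, hq0]) (by simp [hq0])
    have f0 := hW.2 _ hpW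
    rw [eval_F16] at f0
    have t1 : (p - (p 1) • ((q 1)⁻¹ • q)) 0 = 1 := by simp [hp0, hq0]
    have t2 : (p - (p 1) • ((q 1)⁻¹ • q)) 1 = 0 := by simp [hq1]
    have t3 : ((q 1)⁻¹ • q) 0 = 0 := by simp [hq0]
    have t4 : ((q 1)⁻¹ • q) 1 = 1 := by simp [hq1]
    have t5 : ((q 1)⁻¹ • q) 2 = 0 := by simp [hq2]
    generalize p - (p 1) • ((q 1)⁻¹ • q) = P at *
    generalize (q 1)⁻¹ • q = R at *
    rw [t1, t2] at f0
    rw [t2, t4, t5] at f1 f3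
    have g : P 2 = R 3 ^ 3 := by linear_combination f3
    rw [g] at f1 f0
    have hx : (R 3, P 3) ∈ slopes (-a) ×ˢ cubeFix K := by
      refine ⟨?_, ?_⟩
      · change R 3 ^ 9 - (-a) * R 3 ^ 3 - R 3 = 0
        linear_combination -f1
      · change P 3 ^ 3 - P 3 = 0
        linear_combination -f0
    refine ⟨_, hx, ?_⟩
    apply Submodule.eq_of_le_of_finrank_eq
    · rw [planeB, Submodule.span_le]
      rintro x (rfl | rfl)
      · refine (congrArg (· ∈ W) ?_).mpr hqW
        ext i; fin_cases i <;> simp [*]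
      · refine (congrArg (· ∈ W) ?_).mpr hpW
        ext i; fin_cases i <;> simp [*]
    · rw [hW.1, (planeB_mem a hx).1]
  · have hq1 : q 1 = 0 := hq12.resolve_right hq2
    left
    -- Normalize to `q₂ = 1` and `p₂ = 0`.
    have hqW : (q 2)⁻¹ • q ∈ W := W.smul_mem _ hq
    have hpW : p - (p 2) • ((q 2)⁻¹ • q) ∈ W := W.sub_mem hp (W.smul_mem _ hqW)
    obtain ⟨f1, -, f3⟩ := coeffs_of_line a hW hpW hqW (by simp [hp0, hq0]) (by simp [hq0])
    have f0 := hW.2 _ hpW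
    rw [eval_F16] at f0
    have t1 : (p - (p 2) • ((q 2)⁻¹ • q)) 0 = 1 := by simp [hp0, hq0]
    have t2 : (p - (p 2) • ((q 2)⁻¹ • q)) 2 = 0 := by simp [hq2]
    have t3 : ((q 2)⁻¹ • q) 0 = 0 := by simp [hq0]
    have t4 : ((q 2)⁻¹ • q) 2 = 1 := by simp [hq2]
    have t5 : ((q 2)⁻¹ • q) 1 = 0 := by simp [hq1]
    generalize p - (p 2) • ((q 2)⁻¹ • q) = P at *
    generalize (q 2)⁻¹ • q = R at *
    rw [t1, t2] at f0
    rw [t2, t4, t5] at f1 f3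
    have g : P 1 = -R 3 ^ 3 := by linear_combination -f3
    rw [g] at f1 f0
    have hx : (R 3, P 3) ∈ slopes a ×ˢ cubeFix K := by
      refine ⟨?_, ?_⟩
      · change R 3 ^ 9 - a * R 3 ^ 3 - R 3 = 0
        linear_combination -f1
      · change P 3 ^ 3 - P 3 = 0
        linear_combination -f0
    refine ⟨_, hx, ?_⟩
    apply Submodule.eq_of_le_of_finrank_eq
    · rw [planeA, Submodule.span_le]
      rintro x (rfl | rfl)
      · refine (congrArg (· ∈ W) ?_).mpr hqW
        ext i; fin_cases i <;> simp [*]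
      · refine (congrArg (· ∈ W) ?_).mpr hpW
        ext i; fin_cases i <;> simp [*]
    · rw [hW.1, (planeA_mem a hx).1]

/-! ### Counting -/

lemma planesOn_eq [Infinite K] [CharP K 3] (a : K) (ha : a ≠ 0) : planesOn a =
    insert (planeInf K) (planeO '' cubeFix K ∪
      (planeA '' (slopes a ×ˢ cubeFix K) ∪ planeB '' (slopes (-a) ×ˢ cubeFix K))) := by
  ext W
  constructor
  · intro hW
    by_cases h0 : ∀ v ∈ W, v 0 = 0
    · rcases classify_zero a hW h0 with h | h
      · exact Or.inl h
      · exact Or.inr (Or.inl h)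
    · push Not at h0
      exact Or.inr (Or.inr (classify_one a ha hW h0))
  · rintro (rfl | ⟨t, ht, rfl⟩ | ⟨x, hx, rfl⟩ | ⟨x, hx, rfl⟩)
    · exact planeInf_mem a
    · exact planeO_mem a ht
    · exact planeA_mem a hx
    · exact planeB_mem a hx

lemma planeO_injective : Function.Injective (planeO : K → _) := by
  intro t t' h
  have : (![0, 1, t, 0] : Fin 4 → K) ∈ planeO t' := by rw [← h, mem_planeO]; simp
  rw [mem_planeO] at this
  simpa using this

lemma planeA_injective : Function.Injective (planeA : K × K → _) := by
  intro x y h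
  have h1 : (![0, 0, 1, x.1] : Fin 4 → K) ∈ planeA y := by rw [← h, mem_planeA]; simp
  have h2 : (![1, -x.1 ^ 3, 0, x.2] : Fin 4 → K) ∈ planeA y := by rw [← h, mem_planeA]; simp
  rw [mem_planeA] at h1 h2
  simp at h1 h2
  exact Prod.ext h1 h2.2

lemma planeB_injective : Function.Injective (planeB : K × K → _) := by
  intro x y h
  have h1 : (![0, 1, 0, x.1] : Fin 4 → K) ∈ planeB y := by rw [← h, mem_planeB]; simp
  have h2 : (![1, 0, x.1 ^ 3, x.2] : Fin 4 → K) ∈ planeB y := by rw [← h, mem_planeB]; simp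
  rw [mem_planeB] at h1 h2
  simp at h1 h2
  exact Prod.ext h1 h2.2

lemma planeO_ne_planeInf (t : K) : planeO t ≠ planeInf K := by
  intro h
  have : (![0, 1, t, 0] : Fin 4 → K) ∈ planeInf K := by rw [← h, mem_planeO]; simp
  simp [mem_planeInf] at this

lemma planeA_ne_of_zero (x : K × K) {W : Submodule K (Fin 4 → K)} (h0 : ∀ v ∈ W, v 0 = 0) :
    planeA x ≠ W := by
  rintro rfl
  simpa using h0 ![1, -x.1 ^ 3, 0, x.2] (by rw [mem_planeA]; simp)

lemma planeB_ne_of_zero (x : K × K) {W : Submodule K (Fin 4 → K)} (h0 : ∀ v ∈ W, v 0 = 0) :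
    planeB x ≠ W := by
  rintro rfl
  simpa using h0 ![1, 0, x.1 ^ 3, x.2] (by rw [mem_planeB]; simp)

lemma planeA_ne_planeB (x y : K × K) : planeA x ≠ planeB y := by
  intro h
  have : (![0, 0, 1, x.1] : Fin 4 → K) ∈ planeB y := by rw [← h, mem_planeA]; simp
  simp [mem_planeB] at this

lemma encard_planesOn [IsAlgClosed K] [CharP K 3] (a : K) (ha : a ≠ 0) :
    (planesOn a).encard = 58 := by
  have : Infinite K := IsAlgClosed.instInfinite
  have hinf : ∀ v ∈ planeInf K, v 0 = 0 := fun v hv => ((mem_planeInf v).1 hv).1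
  have hO : ∀ t : K, ∀ v ∈ planeO t, v 0 = 0 := fun t v hv => ((mem_planeO t v).1 hv).1
  rw [planesOn_eq a ha, Set.encard_insert_of_notMem, Set.encard_union_eq, Set.encard_union_eq,
    planeO_injective.encard_image, planeA_injective.encard_image, planeB_injective.encard_image,
    Set.encard_prod, Set.encard_prod, encard_slopes, encard_slopes, encard_cubeFix]
  · norm_num
  · rw [Set.disjoint_left]
    rintro _ ⟨x, -, rfl⟩ ⟨y, -, h⟩
    exact planeA_ne_planeB x y h.symm
  · rw [Set.disjoint_left]
    rintro _ ⟨t, -, rfl⟩ (⟨y, -, h⟩ | ⟨y, -, h⟩)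
    · exact planeA_ne_of_zero y (hO t) h
    · exact planeB_ne_of_zero y (hO t) h
  · rintro (⟨t, -, h⟩ | ⟨y, -, h⟩ | ⟨y, -, h⟩)
    · exact planeO_ne_planeInf t h
    · exact planeA_ne_of_zero y hinf h
    · exact planeB_ne_of_zero y hinf h

/-- For every a ≠ 0, the surface x₁³x₂ − x₁x₂³ + x₀³x₃ − x₀x₃³ = a·x₀²x₁x₂ is smooth
and contains exactly 58 lines. -/
theorem statement16 (K : Type*) [Field K] [IsAlgClosed K] [CharP K 3]
    (a : K) (ha : a ≠ 0) :
    (∀ p : Pt K, ¬ IsSingPt (F16 K a) p) ∧ (LinesOn (F16 K a)).encard = 58 := by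
  exact ⟨F16_smooth a, by rw [encard_linesOn, encard_planesOn a ha]⟩

end
end
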